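/- arXiv:0708.2890 — 2 statements merged into one kernel-verified Lean document; each statement's English description precedes it below -/
import Mathlib

section
/- Let V be a finite-dimensional complex vector space, G ⊆ GL(V) a reductive subgroup, and let U ⊆ V be the set of points whose G-orbit is closed and whose G-stabilizer is trivial. If the complement V ∖ U has codimension at least 2 in V, then G' = G. -/
noncomputable section

/-- A function `V → ℂ` is a polynomial function if it lies in the subalgebra of
functions generated by the linear functionals, i.e. it is given by a polynomial
in linear coordinates. -/
def IsPolyFun {V : Type*} [AddCommGroup V] [Module ℂ V] (f : V → ℂ) : Prop :=
  f ∈ Algebra.adjoin ℂ (Set.range fun l : V →ₗ[ℂ] ℂ => (l : V → ℂ))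

/-- Given a subgroup `G` of `GL(V)`, the group `G'` of all linear automorphisms of `V`
preserving every `G`-invariant polynomial function on `V`. -/
def primeGroup {V : Type*} [AddCommGroup V] [Module ℂ V]
    (G : Subgroup (V ≃ₗ[ℂ] V)) : Subgroup (V ≃ₗ[ℂ] V) where
  carrier := {φ | ∀ f : V → ℂ, IsPolyFun f →
      (∀ g ∈ G, ∀ v : V, f (g v) = f v) → ∀ v : V, f (φ v) = f v}
  one_mem' := by intro f _ _ v; rfl
  mul_mem' := by
    intro a b ha hb f hf hinv v
    have h2 : f (a (b v)) = f (b v) := ha f hf hinv (b v)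
    exact h2.trans (hb f hf hinv v)
  inv_mem' := by
    intro a ha f hf hinv v
    have h := ha f hf hinv (a⁻¹ v)
    have : a (a⁻¹ v) = v := a.apply_symm_apply v
    rw [this] at h
    exact h.symm

/-- The algebraic exponential of an endomorphism of a finite-dimensional space
(intended for nilpotent endomorphisms, where the series is a finite sum). -/
def endExp {g : Type*} [AddCommGroup g] [Module ℂ g] [FiniteDimensional ℂ g]
    (A : Module.End ℂ g) : Module.End ℂ g :=
  ∑ k ∈ Finset.range (Module.finrank ℂ g + 1), (k.factorial : ℂ)⁻¹ • A ^ k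

/-- The adjoint group `G = Aut(g)⁰` of a semisimple Lie algebra `g`: the subgroup of
`GL(g)` generated by the exponentials of nilpotent inner derivations `ad x`. -/
def adjointGroup (g : Type*) [LieRing g] [LieAlgebra ℂ g] [FiniteDimensional ℂ g] :
    Subgroup (g ≃ₗ[ℂ] g) :=
  Subgroup.closure {u : g ≃ₗ[ℂ] g | ∃ x : g,
    IsNilpotent (LieAlgebra.ad ℂ g x) ∧ (u : g →ₗ[ℂ] g) = endExp (LieAlgebra.ad ℂ g x)}

/-- The subgroup of `GL(g)` fixing a subalgebra `t` pointwise. -/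
def pointwiseStab {g : Type*} [LieRing g] [LieAlgebra ℂ g]
    (t : LieSubalgebra ℂ g) : Subgroup (g ≃ₗ[ℂ] g) where
  carrier := {u | ∀ x ∈ t, u x = x}
  one_mem' := by intro x _; rfl
  mul_mem' := by
    intro a b ha hb x hx
    have : a (b x) = a x := by rw [hb x hx]
    exact this.trans (ha x hx)
  inv_mem' := by
    intro a ha x hx
    conv_lhs => rw [← ha x hx]
    exact a.symm_apply_apply x

/-- The maximal torus of the adjoint group corresponding to a Cartan subalgebra `t`:
the elements of the adjoint group acting trivially on `t`. -/
def maximalTorus (g : Type*) [LieRing g] [LieAlgebra ℂ g] [FiniteDimensional ℂ g]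
    (t : LieSubalgebra ℂ g) : Subgroup (g ≃ₗ[ℂ] g) :=
  adjointGroup g ⊓ pointwiseStab t

namespace Stmt10

/-- A subset of a complex vector space is Zariski closed if it is the common zero locus
of a family of polynomial functions. -/
def IsZariskiClosed {W : Type*} [AddCommGroup W] [Module ℂ W] (S : Set W) : Prop :=
  ∃ P : Set (W → ℂ), (∀ p ∈ P, IsPolyFun p) ∧ S = {w | ∀ p ∈ P, p w = 0}

/-- A subgroup `G ⊆ GL(V)` is linearly reductive if every rational finite-dimensional
representation of `G` (one whose matrix coefficients are polynomial in the entries of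
`g ∈ G ⊆ End(V)` and in `det(g)⁻¹`) is completely reducible: every invariant subspace
admits an invariant complement. -/
def IsLinearlyReductive {V : Type} [AddCommGroup V] [Module ℂ V]
    (G : Subgroup (V ≃ₗ[ℂ] V)) : Prop :=
  ∀ (W : Type) [AddCommGroup W] [Module ℂ W] [FiniteDimensional ℂ W]
    (ρ : G →* (W ≃ₗ[ℂ] W)),
    (∀ (l : W →ₗ[ℂ] ℂ) (w : W), ∃ p : ((V →ₗ[ℂ] V) × ℂ) → ℂ, IsPolyFun p ∧
      ∀ g : G, l (ρ g w) =
        p (((g : V ≃ₗ[ℂ] V) : V →ₗ[ℂ] V),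
          (LinearMap.det ((g : V ≃ₗ[ℂ] V) : V →ₗ[ℂ] V))⁻¹)) →
    ∀ U : Submodule ℂ W, (∀ g : G, ∀ w ∈ U, ρ g w ∈ U) →
      ∃ U' : Submodule ℂ W, (∀ g : G, ∀ w ∈ U', ρ g w ∈ U') ∧ IsCompl U U'

/-- `G` is a reductive algebraic subgroup of `GL(V)`: it is Zariski closed in `End(V)`
(intersected with `GL(V)`) and linearly reductive. -/
def IsReductiveSubgroup {V : Type} [AddCommGroup V] [Module ℂ V]
    (G : Subgroup (V ≃ₗ[ℂ] V)) : Prop :=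
  (∃ Z : Set (V →ₗ[ℂ] V), IsZariskiClosed Z ∧
    ∀ φ : V ≃ₗ[ℂ] V, φ ∈ G ↔ (φ : V →ₗ[ℂ] V) ∈ Z) ∧
  IsLinearlyReductive G

variable (n : ℕ)

/-- The ideal of polynomials vanishing on a subset of `ℂⁿ`. -/
def vanishingIdeal (S : Set (Fin n → ℂ)) : Ideal (MvPolynomial (Fin n) ℂ) where
  carrier := {p | ∀ v ∈ S, MvPolynomial.eval v p = 0}
  zero_mem' := by intro v _; simp
  add_mem' := by intro a b ha hb v hv; simp [ha v hv, hb v hv]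
  smul_mem' := by intro c p hp v hv; simp [smul_eq_mul, hp v hv]

open MvPolynomial in
lemma hyp_dim {m : ℕ} (q : MvPolynomial (Fin m) ℂ) (x : Fin m → ℂ) (hx : eval x q = 0) :
    (m : WithBot ℕ∞) ≤ ringKrullDim (MvPolynomial (Fin m) ℂ ⧸ Ideal.span {q}) + 1 := by
  have key : ∀ x y : Fin m → ℂ, (MvPolynomial.vanishingIdeal ℂ {x} : Ideal (MvPolynomial (Fin m) ℂ)).height
      ≤ (MvPolynomial.vanishingIdeal ℂ {y} : Ideal (MvPolynomial (Fin m) ℂ)).height := by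
    intro x y
    let e : MvPolynomial (Fin m) ℂ ≃ₐ[ℂ] MvPolynomial (Fin m) ℂ :=
      AlgEquiv.ofAlgHom (aeval (fun i => X i + C (x i - y i))) (aeval (fun i => X i + C (y i - x i)))
        (by ext i; simp; ring) (by ext i; simp; ring)
    have hev : ∀ p, eval y (e p) = eval x p := by
      intro p
      have : (aeval y : MvPolynomial (Fin m) ℂ →ₐ[ℂ] ℂ).comp e.toAlgHom = aeval x := by
        ext i; simp [e]
      have := congrArg (fun f => f p) this
      simpa using this
    have : (MvPolynomial.vanishingIdeal ℂ {x} : Ideal (MvPolynomial (Fin m) ℂ))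
       = (MvPolynomial.vanishingIdeal ℂ {y} : Ideal (MvPolynomial (Fin m) ℂ)).comap e.toRingEquiv := by
      ext p
      have := hev p
      simp [Ideal.mem_comap, aeval_eq_eval, this]
    rw [this, RingEquiv.height_comap]
  have hd : ringKrullDim (MvPolynomial (Fin m) ℂ) = m := by
    simp
  have hM : (MvPolynomial.vanishingIdeal ℂ {x} : Ideal (MvPolynomial (Fin m) ℂ)).IsMaximal :=
    isMaximal_iff_eq_vanishingIdeal_singleton.2 ⟨x, rfl⟩
  have h1 : ringKrullDim (MvPolynomial (Fin m) ℂ) ≤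
      ((MvPolynomial.vanishingIdeal ℂ {x} : Ideal (MvPolynomial (Fin m) ℂ)).height : WithBot ℕ∞) := by
    rw [ringKrullDim_le_iff_isMaximal_height_le]
    intro I hI
    obtain ⟨y, rfl⟩ := isMaximal_iff_eq_vanishingIdeal_singleton.1 hI
    exact_mod_cast key y x
  rw [hd] at h1
  have := hM.isPrime
  refine h1.trans (Ideal.height_le_ringKrullDim_quotient_add_one ?_)
  simpa [aeval_eq_eval] using hx

open MvPolynomial in
lemma hartogs {m : ℕ} (U0 : Set (Fin m → ℂ))
    (hdense : ∀ p : MvPolynomial (Fin m) ℂ, (∀ x ∈ U0, eval x p = 0) → p = 0)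
    (hirr : ∀ q : MvPolynomial (Fin m) ℂ, Irreducible q → ∃ x ∈ U0, eval x q = 0)
    (γ : (Fin m → ℂ) → ℂ)
    (h : ∀ x0 ∈ U0, ∃ d N : MvPolynomial (Fin m) ℂ, eval x0 d ≠ 0 ∧
      ∀ x ∈ U0, γ x * eval x d = eval x N) :
    ∃ Q : MvPolynomial (Fin m) ℂ, ∀ x ∈ U0, γ x = eval x Q := by
  have hne : ∃ x0, x0 ∈ U0 := by
    by_contra hcon
    push Not at hcon
    exact one_ne_zero (hdense 1 (fun x hx => absurd hx (hcon x)))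
  obtain ⟨x0, hx0⟩ := hne
  obtain ⟨d0, N0, hd0, h0⟩ := h x0 hx0
  have hd00 : d0 ≠ 0 := by rintro rfl; simp at hd0
  obtain ⟨d1, N1, c, hrel, hc1, hc2⟩ := UniqueFactorizationMonoid.exists_reduced_factors d0 hd00 N0
  have hc : c ≠ 0 := by rintro rfl; simp at hc1; exact hd00 hc1.symm
  have hd1 : d1 ≠ 0 := by rintro rfl; simp at hc1; exact hd00 hc1.symm
  have hdiv : ∀ d N : MvPolynomial (Fin m) ℂ, (∀ x ∈ U0, γ x * eval x d = eval x N) →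
      ∃ e, d = d1 * e ∧ N = N1 * e := by
    intro d N hdN
    have h1 : d0 * N - N0 * d = 0 := by
      apply hdense
      intro x hx
      simp only [map_sub, map_mul, ← hdN x hx, ← h0 x hx]
      ring
    have h2 : d1 * N = N1 * d := by
      apply mul_left_cancel₀ hc
      rw [← mul_assoc, ← mul_assoc, hc1, hc2]
      exact sub_eq_zero.1 h1
    have h3 : d1 ∣ d := hrel.dvd_of_dvd_mul_left (h2 ▸ dvd_mul_right _ _)
    obtain ⟨e, rfl⟩ := h3
    refine ⟨e, rfl, ?_⟩
    apply mul_left_cancel₀ hd1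
    rw [h2]; ring
  have hunit : IsUnit d1 := by
    by_contra hnu
    obtain ⟨q, hq, hqd⟩ := WfDvdMonoid.exists_irreducible_factor hnu hd1
    obtain ⟨x, hx, hxq⟩ := hirr q hq
    obtain ⟨d, N, hdx, hd⟩ := h x hx
    obtain ⟨e, rfl, -⟩ := hdiv d N hd
    obtain ⟨r, rfl⟩ := hqd
    simp [hxq] at hdx
  obtain ⟨u, hu⟩ := hunit
  refine ⟨N1 * (↑u⁻¹ : MvPolynomial (Fin m) ℂ), fun x hx => ?_⟩
  obtain ⟨d, N, hdx, hd⟩ := h x hx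
  have h5 := hd x hx
  obtain ⟨e, rfl, rfl⟩ := hdiv d N hd
  have h6 : eval x d1 * eval x (↑u⁻¹ : MvPolynomial (Fin m) ℂ) = 1 := by
    rw [← map_mul, ← hu]; simp
  have he : eval x e ≠ 0 := by
    intro he; simp [he] at hdx
  simp only [map_mul] at h5 ⊢
  have h7 : γ x * eval x d1 = eval x N1 := by
    apply mul_right_cancel₀ he
    rw [mul_assoc]; exact h5
  rw [← h7, mul_assoc, h6, mul_one]

open MvPolynomial in
lemma codim_irr {m : ℕ} (I : Ideal (MvPolynomial (Fin m) ℂ))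
    (hcodim : ringKrullDim (MvPolynomial (Fin m) ℂ ⧸ I) + 2 ≤ (m : WithBot ℕ∞))
    (q : MvPolynomial (Fin m) ℂ) (hq : Irreducible q) : ¬ (I ≤ Ideal.span {q}) := by
  intro hle
  have hz : ∃ x, eval x q = 0 := by
    by_contra hcon
    push Not at hcon
    have : zeroLocus ℂ (Ideal.span {q}) = (∅ : Set (Fin m → ℂ)) := by
      rw [Set.eq_empty_iff_forall_notMem]
      intro x hx
      exact hcon x (by simpa [aeval_eq_eval] using hx q (Ideal.mem_span_singleton_self q))
    have h2 := vanishingIdeal_zeroLocus_eq_radical (K := ℂ) (Ideal.span {q})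
    rw [this, vanishingIdeal_empty, eq_comm, Ideal.radical_eq_top, Ideal.span_singleton_eq_top] at h2
    exact hq.not_isUnit h2
  obtain ⟨x, hx⟩ := hz
  have h1 := hyp_dim q x hx
  have h2 : ringKrullDim (MvPolynomial (Fin m) ℂ ⧸ Ideal.span {q}) ≤
      ringKrullDim (MvPolynomial (Fin m) ℂ ⧸ I) :=
    ringKrullDim_le_of_surjective _ (Ideal.Quotient.factor_surjective hle)
  have h3 : (m : WithBot ℕ∞) ≤ ringKrullDim (MvPolynomial (Fin m) ℂ ⧸ I) + 1 :=
    h1.trans (by gcongr)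
  have h4 := hcodim.trans h3
  have h5 := hcodim
  generalize ringKrullDim (MvPolynomial (Fin m) ℂ ⧸ I) = D at h3 h4 h5
  induction D using WithBot.recBotCoe with
  | bot => simp at h3
  | coe D =>
    induction D using ENat.recTopCoe with
    | top => 
      exact absurd h5 (by norm_cast)
    | coe D =>
      have h6 : ((D + 2 : ℕ) : WithBot ℕ∞) ≤ ((m : ℕ) : WithBot ℕ∞) := by
        push_cast; exact h5
      have h7 : D + 2 ≤ m := by exact_mod_cast h6
      have h3 : m ≤ D + 1 := by exact_mod_cast h3
      omega

open MvPolynomial in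
lemma codim_ne_bot {m : ℕ} (I : Ideal (MvPolynomial (Fin m) ℂ))
    (hcodim : ringKrullDim (MvPolynomial (Fin m) ℂ ⧸ I) + 2 ≤ (m : WithBot ℕ∞)) : I ≠ ⊥ := by
  rintro rfl
  have hd : ringKrullDim (MvPolynomial (Fin m) ℂ ⧸ (⊥ : Ideal (MvPolynomial (Fin m) ℂ))) = m := by
    rw [ringKrullDim_eq_of_ringEquiv (RingEquiv.quotientBot _)]; simp
  rw [hd] at hcodim
  have : m + 2 ≤ m := by exact_mod_cast hcodim
  omega

open TensorProduct Polynomial in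
lemma key_field {K T : Type*} [Field K] [CharZero K] [CommRing T] [Algebra K T] [IsReduced T]
    [Nontrivial T] (b : T)
    (h : IsNilpotent ((b ⊗ₜ[K] (1 : T)) - ((1 : T) ⊗ₜ[K] b))) : ∃ k, algebraMap K T k = b := by
  have hbint : IsIntegral K b := by
    rw [← isAlgebraic_iff_isIntegral]
    by_contra htr
    have hinj : Function.Injective (aeval b : K[X] →ₐ[K] T) := by
      rw [← transcendental_iff_injective]; exact htr
    have hinj2 : Function.Injective
        (TensorProduct.map (aeval b : K[X] →ₐ[K] T).toLinearMap (aeval b : K[X] →ₐ[K] T).toLinearMap) :=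
      TensorProduct.map_injective_of_flat_flat _ _ hinj hinj
    let f := Algebra.TensorProduct.map (aeval b : K[X] →ₐ[K] T) (aeval b : K[X] →ₐ[K] T)
    have hf : Function.Injective f := hinj2
    have h2 : IsNilpotent (((X : K[X]) ⊗ₜ[K] (1 : K[X])) - ((1 : K[X]) ⊗ₜ[K] (X : K[X]))) := by
      rw [← IsNilpotent.map_iff hf]
      simpa [f] using h
    let g : K[X] ⊗[K] K[X] →ₐ[K] K[X] :=
      Algebra.TensorProduct.lift (AlgHom.id K K[X]) (aeval (0 : K[X])) (fun _ _ => Commute.all _ _)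
    have h3 := h2.map g
    simp [g] at h3
  have hsq : Squarefree (minpoly K b) := by
    refine IsRadical.squarefree (minpoly.ne_zero hbint) ?_
    intro n p hp
    rw [minpoly.dvd_iff] at hp ⊢
    rw [map_pow] at hp
    exact eq_zero_of_pow_eq_zero hp
  have hsep : (minpoly K b).Separable := PerfectField.separable_iff_squarefree.2 hsq
  have hb1 : aeval (b ⊗ₜ[K] (1 : T)) (minpoly K b) = 0 := by
    have := aeval_algHom_apply (Algebra.TensorProduct.includeLeft : T →ₐ[K] T ⊗[K] T) b (minpoly K b)
    simpa using this
  have hb2 : aeval ((1 : T) ⊗ₜ[K] b) (minpoly K b) = 0 := by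
    have := aeval_algHom_apply (Algebra.TensorProduct.includeRight : T →ₐ[K] T ⊗[K] T) b (minpoly K b)
    simpa using this
  have hu : IsUnit (aeval (b ⊗ₜ[K] (1 : T)) (derivative (minpoly K b))) := by
    obtain ⟨u, w, huw⟩ := hsep
    have := congrArg (aeval (b ⊗ₜ[K] (1 : T))) huw
    simp only [map_add, map_mul, hb1, mul_zero, zero_add, map_one] at this
    exact IsUnit.of_mul_eq_one_right _ this
  have huniq := (existsUnique_nilpotent_sub_and_aeval_eq_zero (by rw [hb1]; exact IsNilpotent.zero) hu).unique
    (⟨by rw [sub_self]; exact IsNilpotent.zero, hb1⟩) ⟨h, hb2⟩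
  obtain ⟨E, hE⟩ := LinearMap.exists_leftInverse_of_injective (Algebra.linearMap K T)
    (LinearMap.ker_eq_bot.2 (FaithfulSMul.algebraMap_injective K T))
  have hE1 : E 1 = 1 := by
    have := congrArg (fun f => f 1) hE
    simpa using this
  have h5 := congrArg (TensorProduct.lid K T ∘ (LinearMap.rTensor T E)) huniq
  simp [hE1] at h5
  exact ⟨E b, by rw [Algebra.algebraMap_eq_smul_one]; exact h5⟩

lemma nilp_of_chars {T : Type*} [CommRing T] [Algebra ℂ T] [Algebra.FiniteType ℂ T] (t : T)
    (h : ∀ χ : T →ₐ[ℂ] ℂ, χ t = 0) : IsNilpotent t := by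
  have hJ : IsJacobsonRing T := isJacobsonRing_of_finiteType (A := ℂ)
  rw [← mem_nilradical, nilradical, Ideal.radical_eq_jacobson, Ideal.jacobson, Submodule.mem_sInf]
  rintro J ⟨-, hJm⟩
  let _ : Field (T ⧸ J) := Ideal.Quotient.field J
  have hfin : Module.Finite ℂ (T ⧸ J) := finite_of_finite_type_of_isJacobsonRing ℂ (T ⧸ J)
  have hbij : Function.Bijective (algebraMap ℂ (T ⧸ J)) :=
    IsAlgClosed.algebraMap_bijective_of_isIntegral
  let e : ℂ ≃ₐ[ℂ] (T ⧸ J) := AlgEquiv.ofBijective (Algebra.ofId ℂ (T ⧸ J)) hbij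
  have h1 := h (e.symm.toAlgHom.comp (Ideal.Quotient.mkₐ ℂ J))
  have h2 : Ideal.Quotient.mk J t = 0 := by
    apply e.symm.injective
    simpa using h1
  exact Ideal.Quotient.eq_zero_iff_mem.1 h2

open TensorProduct in
lemma conductor {A B : Type*} [CommRing A] [CommRing B] [Algebra ℂ A] [Algebra ℂ B] [Algebra A B]
    [IsScalarTower ℂ A B] (hinj : Function.Injective (algebraMap A B)) [IsReduced B]
    [Algebra.FiniteType ℂ B] [Nontrivial A]
    (hsep : ∀ χ₁ χ₂ : B →ₐ[ℂ] ℂ, (∀ a, χ₁ (algebraMap A B a) = χ₂ (algebraMap A B a)) → χ₁ = χ₂)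
    (s : Finset B) :
    ∃ a : A, a ≠ 0 ∧ ∀ b ∈ s, ∃ c, algebraMap A B c = algebraMap A B a * b := by
  have hnil : ∀ b : B, IsNilpotent ((b ⊗ₜ[A] (1 : B)) - ((1 : B) ⊗ₜ[A] b)) := by
    intro b
    have : Algebra.FiniteType ℂ (B ⊗[A] B) := by
      have : Algebra.FiniteType A B := Algebra.FiniteType.of_restrictScalars_finiteType ℂ A B
      exact Algebra.FiniteType.trans (S := B) inferInstance inferInstance
    apply nilp_of_chars
    intro χ
    have := hsep (χ.comp ((Algebra.TensorProduct.includeLeft : B →ₐ[A] B ⊗[A] B).restrictScalars ℂ))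
      (χ.comp ((Algebra.TensorProduct.includeRight : B →ₐ[A] B ⊗[A] B).restrictScalars ℂ)) (by
        intro a
        simp)
    have := congrArg (fun f => f b) this
    simp at this
    simp [this]
  have hredA : IsReduced A := isReduced_of_injective _ hinj
  obtain ⟨p, hp⟩ := Ideal.nonempty_minimalPrimes (I := (⊥ : Ideal A)) bot_ne_top
  have hpp : p.IsPrime := hp.1.1
  have : Ring.KrullDimLE 0 (Localization.AtPrime p) := .of_isLocalization _ hp _
  let : Field (Localization.AtPrime p) := Ring.KrullDimLE.isField_of_isReduced.toField
  let M := Algebra.algebraMapSubmonoid B p.primeCompl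
  let T := Localization M
  let K := Localization.AtPrime p
  have hM0 : (0 : B) ∉ M := by
    rintro ⟨x, hx, hx0⟩
    have : x = 0 := hinj (by rw [map_zero]; exact hx0)
    exact hx (this ▸ p.zero_mem)
  have : Nontrivial T := by
    refine ⟨0, 1, fun h01 => ?_⟩
    have h1 : algebraMap B T 1 = 0 := by rw [map_one, ← h01]
    obtain ⟨m, hm⟩ := (IsLocalization.map_eq_zero_iff M T 1).1 h1
    rw [mul_one] at hm
    exact hM0 (hm ▸ m.2)
  have hTred : IsReduced T := isReduced_localizationPreserves M _ inferInstance
  have : CharZero K := charZero_of_injective_algebraMap (R := ℂ) (algebraMap ℂ K).injective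
  have hfr : ∀ b : B, ∃ a ∈ p.primeCompl, ∃ c, algebraMap A B c = algebraMap A B a * b := by
    intro b
    let f : B ⊗[A] B →ₐ[A] T ⊗[K] T := Algebra.TensorProduct.lift
      (((Algebra.TensorProduct.includeLeft : T →ₐ[K] T ⊗[K] T).restrictScalars A).comp (IsScalarTower.toAlgHom A B T))
      (((Algebra.TensorProduct.includeRight : T →ₐ[K] T ⊗[K] T).restrictScalars A).comp (IsScalarTower.toAlgHom A B T))
      (fun _ _ => Commute.all _ _)
    have h1 := (hnil b).map f
    simp [f] at h1
    obtain ⟨k, hk⟩ := key_field (K := K) (algebraMap B T b) h1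
    obtain ⟨⟨c, a⟩, hca⟩ := IsLocalization.surj p.primeCompl k
    have h2 : algebraMap B T (algebraMap A B a * b) = algebraMap B T (algebraMap A B c) := by
      have h3 := congrArg (algebraMap K T) hca
      rw [map_mul, hk, ← IsScalarTower.algebraMap_apply A K T, ← IsScalarTower.algebraMap_apply A K T,
        IsScalarTower.algebraMap_apply A B T, IsScalarTower.algebraMap_apply A B T] at h3
      rw [map_mul, mul_comm]
      exact h3
    obtain ⟨⟨m, x, hx, rfl⟩, hm⟩ := IsLocalization.exists_of_eq (M := M) h2
    refine ⟨x * a, mul_mem hx a.2, x * c, ?_⟩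
    rw [map_mul, map_mul, mul_assoc]
    exact hm.symm
  choose a ha c hc using hfr
  refine ⟨∏ b ∈ s, a b, ?_, ?_⟩
  · intro h0
    have : ∏ b ∈ s, a b ∈ p.primeCompl := Submonoid.prod_mem _ (fun b _ => ha b)
    rw [h0] at this
    exact this p.zero_mem
  · intro b hb
    classical
    refine ⟨(∏ x ∈ s.erase b, a x) * c b, ?_⟩
    rw [map_mul, hc, ← Finset.prod_erase_mul s a hb, map_mul, mul_assoc]

/-! ### Polynomial functions -/

lemma pf_const {V : Type*} [AddCommGroup V] [Module ℂ V] (c : ℂ) :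
    IsPolyFun (fun _ : V => c) := by
  have := Subalgebra.algebraMap_mem
    (Algebra.adjoin ℂ (Set.range fun l : V →ₗ[ℂ] ℂ => (l : V → ℂ))) c
  exact this

lemma pf_lin {V : Type*} [AddCommGroup V] [Module ℂ V] (l : V →ₗ[ℂ] ℂ) :
    IsPolyFun (fun x : V => l x) :=
  Algebra.subset_adjoin ⟨l, rfl⟩

lemma pf_add {V : Type*} [AddCommGroup V] [Module ℂ V] {f g : V → ℂ}
    (hf : IsPolyFun f) (hg : IsPolyFun g) : IsPolyFun (fun x => f x + g x) :=
  Subalgebra.add_mem _ hf hg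

lemma pf_sub {V : Type*} [AddCommGroup V] [Module ℂ V] {f g : V → ℂ}
    (hf : IsPolyFun f) (hg : IsPolyFun g) : IsPolyFun (fun x => f x - g x) :=
  Subalgebra.sub_mem _ hf hg

lemma pf_mul {V : Type*} [AddCommGroup V] [Module ℂ V] {f g : V → ℂ}
    (hf : IsPolyFun f) (hg : IsPolyFun g) : IsPolyFun (fun x => f x * g x) :=
  Subalgebra.mul_mem _ hf hg

lemma pf_sum {V : Type*} [AddCommGroup V] [Module ℂ V] {ι : Type*} (s : Finset ι)
    (f : ι → V → ℂ) (hf : ∀ i ∈ s, IsPolyFun (f i)) : IsPolyFun (fun x => ∑ i ∈ s, f i x) := by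
  have := Subalgebra.sum_mem
    (Algebra.adjoin ℂ (Set.range fun l : V →ₗ[ℂ] ℂ => (l : V → ℂ))) (t := s) (f := f) hf
  have e : (fun x => ∑ i ∈ s, f i x) = ∑ i ∈ s, f i := by ext x; simp
  unfold IsPolyFun
  rw [e]; exact this

lemma pf_comp {V W : Type*} [AddCommGroup V] [Module ℂ V] [AddCommGroup W] [Module ℂ W]
    (F : V → W) (hF : ∀ l : W →ₗ[ℂ] ℂ, IsPolyFun (fun x => l (F x))) {f : W → ℂ}
    (hf : IsPolyFun f) : IsPolyFun (fun x => f (F x)) := by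
  unfold IsPolyFun at hf
  induction hf using Algebra.adjoin_induction with
  | mem x hx => obtain ⟨l, rfl⟩ := hx; exact hF l
  | algebraMap r => exact pf_const r
  | add x y _ _ hx hy => exact pf_add hx hy
  | mul x y _ _ hx hy => exact pf_mul hx hy

lemma pf_comp_lin {V W : Type*} [AddCommGroup V] [Module ℂ V] [AddCommGroup W] [Module ℂ W]
    (F : V →ₗ[ℂ] W) {f : W → ℂ}
    (hf : IsPolyFun f) : IsPolyFun (fun x => f (F x)) :=
  pf_comp F (fun l => pf_lin (l.comp F)) hf

lemma pf_iff {m : ℕ} (f : (Fin m → ℂ) → ℂ) :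
    IsPolyFun f ↔ ∃ p : MvPolynomial (Fin m) ℂ, ∀ x, f x = MvPolynomial.eval x p := by
  constructor
  · intro hf
    unfold IsPolyFun at hf
    induction hf using Algebra.adjoin_induction with
    | mem x hx =>
      obtain ⟨l, rfl⟩ := hx
      refine ⟨∑ i, MvPolynomial.C (l (Pi.single i 1)) * MvPolynomial.X i, fun x => ?_⟩
      simp only [map_sum, map_mul, MvPolynomial.eval_C, MvPolynomial.eval_X]
      rw [LinearMap.pi_apply_eq_sum_univ l x]
      refine Finset.sum_congr rfl fun i _ => ?_
      rw [smul_eq_mul, mul_comm]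
      congr 2
      ext j
      simp [Pi.single_apply, eq_comm]
    | algebraMap r => exact ⟨MvPolynomial.C r, fun x => by simp⟩
    | add x y _ _ hx hy =>
      obtain ⟨p, hp⟩ := hx; obtain ⟨q, hq⟩ := hy
      exact ⟨p + q, fun x => by simp [hp, hq]⟩
    | mul x y _ _ hx hy =>
      obtain ⟨p, hp⟩ := hx; obtain ⟨q, hq⟩ := hy
      exact ⟨p * q, fun x => by simp [hp, hq]⟩
  · rintro ⟨p, hp⟩
    obtain rfl : f = fun x => MvPolynomial.eval x p := funext hp
    clear hp
    induction p using MvPolynomial.induction_on with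
    | C a => simpa using pf_const a
    | add p q hp hq => simpa using pf_add hp hq
    | mul_X p i hp => simpa using pf_mul hp (pf_lin (LinearMap.proj i))

lemma pf_eval {m : ℕ} (p : MvPolynomial (Fin m) ℂ) :
    IsPolyFun (fun x => MvPolynomial.eval x p) := (pf_iff _).2 ⟨p, fun _ => rfl⟩

lemma pf_of_pi {V : Type*} [AddCommGroup V] [Module ℂ V] {m : ℕ} (F : V → (Fin m → ℂ))
    (hF : ∀ i, IsPolyFun (fun x => F x i)) (l : (Fin m → ℂ) →ₗ[ℂ] ℂ) :
    IsPolyFun (fun x => l (F x)) := by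
  have : (fun x => l (F x)) = fun x => ∑ i, F x i * l (fun j => if i = j then 1 else 0) := by
    ext x
    rw [LinearMap.pi_apply_eq_sum_univ l (F x)]; rfl
  rw [this]
  exact pf_sum _ _ fun i _ => pf_mul (hF i) (pf_const _)

/-- adjugate entries are polynomial -/
lemma pf_adjugate {V : Type*} [AddCommGroup V] [Module ℂ V] {m : ℕ}
    (M : V → Matrix (Fin m) (Fin m) ℂ) (hM : ∀ i j, IsPolyFun (fun x => M x i j)) (i j : Fin m) :
    IsPolyFun (fun x => (M x).adjugate i j) := by
  let A := Algebra.adjoin ℂ (Set.range fun l : V →ₗ[ℂ] ℂ => (l : V → ℂ))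
  let X : Matrix (Fin m) (Fin m) A := fun i j => ⟨fun x => M x i j, hM i j⟩
  let ev : V → (A →+* ℂ) := fun x => (Pi.evalRingHom (fun _ : V => ℂ) x).comp A.subtype
  have h1 : (fun x => (M x).adjugate i j) = (X.adjugate i j : V → ℂ) := by
    ext x
    have h2 := RingHom.map_adjugate (ev x) X
    have h3 : (ev x).mapMatrix X = M x := rfl
    rw [h3] at h2
    rw [← h2]; rfl
  rw [h1]
  exact (X.adjugate i j).2

lemma pf_det {V : Type*} [AddCommGroup V] [Module ℂ V] {m : ℕ}
    (M : V → Matrix (Fin m) (Fin m) ℂ) (hM : ∀ i j, IsPolyFun (fun x => M x i j)) :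
    IsPolyFun (fun x => (M x).det) := by
  let A := Algebra.adjoin ℂ (Set.range fun l : V →ₗ[ℂ] ℂ => (l : V → ℂ))
  let X : Matrix (Fin m) (Fin m) A := fun i j => ⟨fun x => M x i j, hM i j⟩
  let ev : V → (A →+* ℂ) := fun x => (Pi.evalRingHom (fun _ : V => ℂ) x).comp A.subtype
  have h1 : (fun x => (M x).det) = (X.det : V → ℂ) := by
    ext x
    have h2 := RingHom.map_det (ev x) X
    have h3 : (ev x).mapMatrix X = M x := rfl
    rw [h3] at h2
    rw [← h2]; rfl
  rw [h1]
  exact (X.det).2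

/-! ### Local finiteness -/

def LL (m : ℕ) : Submodule ℂ ((Fin m → ℂ) → ℂ) :=
  LinearMap.range ((LinearMap.toSpanSingleton ℂ ((Fin m → ℂ) → ℂ) 1).coprod
    (LinearMap.ltoFun ℂ (Fin m → ℂ) ℂ ℂ))

lemma mem_LL {m : ℕ} (f : (Fin m → ℂ) → ℂ) :
    f ∈ LL m ↔ ∃ (c : ℂ) (l : (Fin m → ℂ) →ₗ[ℂ] ℂ), ∀ x, f x = c + l x := by
  unfold LL
  constructor
  · rintro ⟨⟨c, l⟩, rfl⟩
    exact ⟨c, l, fun x => by simp⟩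
  · rintro ⟨c, l, h⟩
    refine ⟨(c, l), ?_⟩
    ext x; simp [h]

lemma one_le_LL (m : ℕ) : (1 : Submodule ℂ ((Fin m → ℂ) → ℂ)) ≤ LL m := by
  rw [Submodule.one_le, mem_LL]
  exact ⟨1, 0, fun x => by simp⟩

lemma LL_fg (m d : ℕ) : (LL m ^ d).FG := by
  apply Submodule.FG.pow
  unfold LL
  rw [LinearMap.range_eq_map]
  exact Submodule.FG.map _ (Module.finite_def.1 inferInstance)

def compHom {m : ℕ} (g : (Fin m → ℂ) →ₗ[ℂ] (Fin m → ℂ)) :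
    ((Fin m → ℂ) → ℂ) →ₐ[ℂ] ((Fin m → ℂ) → ℂ) where
  toFun f := fun x => f (g x)
  map_one' := rfl
  map_mul' _ _ := rfl
  map_zero' := rfl
  map_add' _ _ := rfl
  commutes' _ := rfl

lemma LL_stable {m : ℕ} (d : ℕ) (g : (Fin m → ℂ) →ₗ[ℂ] (Fin m → ℂ)) (f : (Fin m → ℂ) → ℂ)
    (hf : f ∈ LL m ^ d) : (fun x => f (g x)) ∈ LL m ^ d := by
  have h1 : (LL m).map (compHom g).toLinearMap ≤ LL m := by
    rintro _ ⟨f, hf, rfl⟩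
    obtain ⟨c, l, h⟩ := (mem_LL f).1 hf
    exact (mem_LL _).2 ⟨c, l.comp g, fun x => h (g x)⟩
  have h2 : (LL m ^ d).map (compHom g).toLinearMap ≤ LL m ^ d := by
    rw [Submodule.map_pow]
    exact pow_le_pow_left' h1 d
  exact h2 ⟨f, hf, rfl⟩

lemma LL_mono {m : ℕ} {d e : ℕ} (h : d ≤ e) : LL m ^ d ≤ LL m ^ e :=
  pow_le_pow_right₀ (one_le_LL m) h

lemma LL_pf {m : ℕ} (d : ℕ) (f : (Fin m → ℂ) → ℂ) (hf : f ∈ LL m ^ d) : IsPolyFun f := by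
  have h1 : LL m ≤ Subalgebra.toSubmodule
      (Algebra.adjoin ℂ (Set.range fun l : (Fin m → ℂ) →ₗ[ℂ] ℂ => (l : (Fin m → ℂ) → ℂ))) := by
    intro f hf
    obtain ⟨c, l, h⟩ := (mem_LL f).1 hf
    obtain rfl : f = fun x => c + l x := funext h
    exact pf_add (pf_const c) (pf_lin l)
  have h2 : ∀ a ∈ LL m ^ d, a ∈ Subalgebra.toSubmodule
      (Algebra.adjoin ℂ (Set.range fun l : (Fin m → ℂ) →ₗ[ℂ] ℂ => (l : (Fin m → ℂ) → ℂ))) := by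
    clear hf
    induction d with
    | zero => rw [pow_zero]; exact Submodule.one_le.2 (Subalgebra.one_mem _)
    | succ d ih =>
      rw [pow_succ]
      exact Submodule.mul_le.2 fun a ha b hb => Subalgebra.mul_mem _ (ih a ha) (h1 hb)
  exact h2 f hf

lemma pf_LL {m : ℕ} (f : (Fin m → ℂ) → ℂ) (hf : IsPolyFun f) : ∃ d, f ∈ LL m ^ d := by
  unfold IsPolyFun at hf
  induction hf using Algebra.adjoin_induction with
  | mem x hx =>
    obtain ⟨l, rfl⟩ := hx
    exact ⟨1, by rw [pow_one, mem_LL]; exact ⟨0, l, fun x => by simp⟩⟩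
  | algebraMap r => exact ⟨1, by rw [pow_one, mem_LL]; exact ⟨r, 0, fun x => by simp⟩⟩
  | add x y _ _ hx hy =>
    obtain ⟨d, hd⟩ := hx; obtain ⟨e, he⟩ := hy
    exact ⟨max d e, Submodule.add_mem _ (LL_mono (le_max_left _ _) hd)
      (LL_mono (le_max_right _ _) he)⟩
  | mul x y _ _ hx hy =>
    obtain ⟨d, hd⟩ := hx; obtain ⟨e, he⟩ := hy
    exact ⟨d + e, by rw [pow_add]; exact Submodule.mul_mem_mul hd he⟩

lemma exists_stable {m : ℕ} {ι : Type*} [Finite ι] (f : ι → (Fin m → ℂ) → ℂ)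
    (hf : ∀ i, IsPolyFun (f i)) : ∃ d, ∀ i, f i ∈ LL m ^ d := by
  choose d hd using fun i => pf_LL (f i) (hf i)
  obtain ⟨D, hD⟩ := (Set.finite_range d).bddAbove
  exact ⟨D, fun i => LL_mono (hD ⟨i, rfl⟩) (hd i)⟩

/-! ### Complements from linear reductivity -/

lemma inv_formula {m : ℕ} (g : (Fin m → ℂ) ≃ₗ[ℂ] (Fin m → ℂ)) (x : Fin m → ℂ) :
    g⁻¹ x = (LinearMap.det (g : (Fin m → ℂ) →ₗ[ℂ] (Fin m → ℂ)))⁻¹ •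
      (LinearMap.toMatrix' (g : (Fin m → ℂ) →ₗ[ℂ] (Fin m → ℂ))).adjugate.mulVec x := by
  set A := LinearMap.toMatrix' (g : (Fin m → ℂ) →ₗ[ℂ] (Fin m → ℂ)) with hA
  have hdet : LinearMap.det (g : (Fin m → ℂ) →ₗ[ℂ] (Fin m → ℂ)) = A.det := by
    rw [hA, LinearMap.det_toMatrix']
  have hne : LinearMap.det (g : (Fin m → ℂ) →ₗ[ℂ] (Fin m → ℂ)) ≠ 0 :=
    (LinearEquiv.isUnit_det' g).ne_zero
  obtain ⟨y, rfl⟩ := g.surjective x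
  have h1 : g y = A.mulVec y := by
    rw [hA, LinearMap.toMatrix'_mulVec]; rfl
  have h2 : g⁻¹ (g y) = y := g.symm_apply_apply y
  rw [h2, h1, Matrix.mulVec_mulVec, Matrix.adjugate_mul, hdet, Matrix.smul_mulVec,
    Matrix.one_mulVec, smul_smul, inv_mul_cancel₀ (hdet ▸ hne), one_smul]

lemma pf_inv {m : ℕ} (f : (Fin m → ℂ) → ℂ) (hf : IsPolyFun f) (x : Fin m → ℂ) :
    ∃ p : (((Fin m → ℂ) →ₗ[ℂ] (Fin m → ℂ)) × ℂ) → ℂ, IsPolyFun p ∧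
      ∀ g : (Fin m → ℂ) ≃ₗ[ℂ] (Fin m → ℂ), f (g⁻¹ x) = p ((g : (Fin m → ℂ) →ₗ[ℂ] (Fin m → ℂ)),
        (LinearMap.det (g : (Fin m → ℂ) →ₗ[ℂ] (Fin m → ℂ)))⁻¹) := by
  refine ⟨fun y => f (y.2 • (LinearMap.toMatrix' y.1).adjugate.mulVec x), ?_, fun g => ?_⟩
  · refine pf_comp _ (pf_of_pi _ fun i => ?_) hf
    simp only [Pi.smul_apply, smul_eq_mul, Matrix.mulVec, dotProduct]
    refine pf_mul (f := fun y : ((Fin m → ℂ) →ₗ[ℂ] (Fin m → ℂ)) × ℂ => y.2)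
      (pf_lin (LinearMap.snd ℂ ((Fin m → ℂ) →ₗ[ℂ] (Fin m → ℂ)) ℂ)) (pf_sum _ _ fun j _ => pf_mul ?_ (pf_const _))
    refine pf_adjugate (fun y : ((Fin m → ℂ) →ₗ[ℂ] (Fin m → ℂ)) × ℂ => LinearMap.toMatrix' y.1)
      (fun a b => ?_) i j
    exact pf_lin ((Matrix.entryLinearMap ℂ ℂ a b).comp
      (LinearMap.toMatrix'.toLinearMap.comp (LinearMap.fst ℂ _ ℂ)))
  · simp only
    rw [inv_formula g x]

lemma compl_lemma {m : ℕ} (G : Subgroup ((Fin m → ℂ) ≃ₗ[ℂ] (Fin m → ℂ)))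
    (hlr : IsLinearlyReductive G) (W : Submodule ℂ ((Fin m → ℂ) → ℂ)) [FiniteDimensional ℂ W]
    (hpoly : ∀ f ∈ W, IsPolyFun f) (hst : ∀ g ∈ G, ∀ f ∈ W, (fun x => f (g x)) ∈ W)
    (K : Submodule ℂ ((Fin m → ℂ) → ℂ)) (hK : K ≤ W)
    (hKst : ∀ g ∈ G, ∀ f ∈ K, (fun x => f (g x)) ∈ K) :
    ∃ C : Submodule ℂ ((Fin m → ℂ) → ℂ), C ≤ W ∧ (∀ g ∈ G, ∀ f ∈ C, (fun x => f (g x)) ∈ C) ∧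
      (∀ f ∈ K, f ∈ C → f = 0) ∧ ∀ f ∈ W, ∃ a ∈ K, ∃ b ∈ C, f = a + b := by
  let ρ0 : G →* Module.End ℂ W :=
    { toFun := fun g => (LinearMap.funLeft ℂ ℂ (fun x => g.1⁻¹ x)).restrict
        (fun f hf => hst _ (G.inv_mem g.2) f hf)
      map_one' := by
        ext f x
        simp [LinearMap.restrict_apply, LinearMap.funLeft]
      map_mul' := by
        intro a b
        ext f x
        simp [LinearMap.restrict_apply, LinearMap.funLeft] }
  have hρ0 : ∀ (g : G) (f : W) (x), (ρ0 g f : (Fin m → ℂ) → ℂ) x = f.1 (g.1⁻¹ x) := fun g f x => rfl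
  let ρ : G →* (W ≃ₗ[ℂ] W) :=
    (LinearMap.GeneralLinearGroup.generalLinearEquiv ℂ W).toMonoidHom.comp (MonoidHom.toHomUnits ρ0)
  have hρ : ∀ (g : G) (f : W) (x), (ρ g f : (Fin m → ℂ) → ℂ) x = f.1 (g.1⁻¹ x) := fun g f x => rfl
  have hrat : ∀ (l : W →ₗ[ℂ] ℂ) (w : W), ∃ p : (((Fin m → ℂ) →ₗ[ℂ] (Fin m → ℂ)) × ℂ) → ℂ,
      IsPolyFun p ∧ ∀ g : G, l (ρ g w) =
        p (((g : (Fin m → ℂ) ≃ₗ[ℂ] (Fin m → ℂ)) : (Fin m → ℂ) →ₗ[ℂ] (Fin m → ℂ)),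
          (LinearMap.det ((g : (Fin m → ℂ) ≃ₗ[ℂ] (Fin m → ℂ)) :
            (Fin m → ℂ) →ₗ[ℂ] (Fin m → ℂ)))⁻¹) := by
    let ev : (Fin m → ℂ) → Module.Dual ℂ W := fun x => (LinearMap.proj x).comp W.subtype
    have hspan : Submodule.span ℂ (Set.range ev) = ⊤ := by
      apply Submodule.span_eq_top_of_ne_zero
      intro w hw
      by_contra hcon
      push Not at hcon
      apply hw
      ext x
      exact hcon _ ⟨x, rfl⟩
    intro l w
    have hl : l ∈ Submodule.span ℂ (Set.range ev) := by rw [hspan]; trivial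
    induction hl using Submodule.span_induction with
    | mem l hl =>
      obtain ⟨x, rfl⟩ := hl
      obtain ⟨p, hp, h⟩ := pf_inv w.1 (hpoly _ w.2) x
      exact ⟨p, hp, fun g => h g.1⟩
    | zero => exact ⟨fun _ => 0, pf_const 0, fun g => rfl⟩
    | add a b _ _ ha hb =>
      obtain ⟨p, hp, h⟩ := ha
      obtain ⟨q, hq, h'⟩ := hb
      exact ⟨_, pf_add hp hq, fun g => by simp only [LinearMap.add_apply, h, h']⟩
    | smul c a _ ha =>
      obtain ⟨p, hp, h⟩ := ha
      exact ⟨_, pf_mul (pf_const c) hp, fun g => by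
        simp only [LinearMap.smul_apply, h, smul_eq_mul]⟩
  obtain ⟨C, hC, hcompl⟩ := hlr W ρ hrat (K.comap W.subtype) (by
    intro g w hw
    exact hKst _ (G.inv_mem g.2) _ hw)
  refine ⟨C.map W.subtype, Submodule.map_subtype_le _ _, ?_, ?_, ?_⟩
  · rintro g hg _ ⟨f, hf, rfl⟩
    refine ⟨ρ (⟨g, hg⟩⁻¹) f, hC _ _ hf, ?_⟩
    ext x
    change f.1 ((g⁻¹)⁻¹ x) = _
    rw [inv_inv]; rfl
  · rintro _ hf ⟨f, hf', rfl⟩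
    have : f ∈ (K.comap W.subtype) ⊓ C := ⟨hf, hf'⟩
    rw [hcompl.inf_eq_bot] at this
    rw [(Submodule.mem_bot ℂ).1 this]; rfl
  · intro f hf
    have : (⟨f, hf⟩ : W) ∈ (K.comap W.subtype) ⊔ C := by rw [hcompl.sup_eq_top]; trivial
    obtain ⟨a, ha, b, hb, hab⟩ := Submodule.mem_sup.1 this
    exact ⟨a, ha, b, ⟨b, hb, rfl⟩, (congrArg Subtype.val hab).symm⟩

/-! ### Coordinates on the group -/

def ent {m : ℕ} (g : (Fin m → ℂ) ≃ₗ[ℂ] (Fin m → ℂ)) (i j : Fin m) : ℂ :=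
  (g (Pi.single j 1)) i

lemma ent_apply {m : ℕ} (g : (Fin m → ℂ) ≃ₗ[ℂ] (Fin m → ℂ)) (x : Fin m → ℂ) (i : Fin m) :
    (g x) i = ∑ j, ent g i j * x j := by
  have := LinearMap.pi_apply_eq_sum_univ (g : (Fin m → ℂ) →ₗ[ℂ] (Fin m → ℂ)) x
  have h2 := congrFun this i
  simp only [LinearEquiv.coe_coe] at h2
  rw [h2, Finset.sum_apply]
  refine Finset.sum_congr rfl fun j _ => ?_
  rw [Pi.smul_apply, smul_eq_mul, mul_comm]
  unfold ent
  have e : (fun k : Fin m => if j = k then (1 : ℂ) else 0) = Pi.single j 1 := by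
    ext k
    simp [Pi.single_apply, eq_comm]
  rw [e]

lemma ent_mul {m : ℕ} (g h : (Fin m → ℂ) ≃ₗ[ℂ] (Fin m → ℂ)) (i j : Fin m) :
    ent (g * h) i j = ∑ l, ent g i l * ent h l j := by
  have : ent (g * h) i j = (g (h (Pi.single j 1))) i := rfl
  rw [this, ent_apply]; rfl

lemma ent_one {m : ℕ} (i j : Fin m) :
    ent (1 : (Fin m → ℂ) ≃ₗ[ℂ] (Fin m → ℂ)) i j = (1 : Matrix (Fin m) (Fin m) ℂ) i j := by
  change (Pi.single j (1 : ℂ) : Fin m → ℂ) i = _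
  rw [Matrix.one_apply, Pi.single_apply]

lemma ent_ext {m : ℕ} {g h : (Fin m → ℂ) ≃ₗ[ℂ] (Fin m → ℂ)}
    (H : ∀ i j, ent g i j = ent h i j) : g = h := by
  ext x i
  simp [ent_apply, H]

def entL {m : ℕ} (i j : Fin m) : ((Fin m → ℂ) →ₗ[ℂ] (Fin m → ℂ)) →ₗ[ℂ] ℂ :=
  (Matrix.entryLinearMap ℂ ℂ i j).comp LinearMap.toMatrix'.toLinearMap

lemma entL_eq {m : ℕ} (g : (Fin m → ℂ) ≃ₗ[ℂ] (Fin m → ℂ)) (i j : Fin m) :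
    entL i j (g : (Fin m → ℂ) →ₗ[ℂ] (Fin m → ℂ)) = ent g i j := by
  simp [entL, ent, LinearMap.toMatrix'_apply]

lemma lin_end {m : ℕ} (l : ((Fin m → ℂ) →ₗ[ℂ] (Fin m → ℂ)) →ₗ[ℂ] ℂ) :
    ∃ c : Fin m → Fin m → ℂ, ∀ T, l T = ∑ i, ∑ j, entL i j T * c i j := by
  refine ⟨fun i j => l (Matrix.toLin' (Matrix.single i j 1)), fun T => ?_⟩
  have h : T = Matrix.toLin' (∑ i, ∑ j, (LinearMap.toMatrix' T i j) •
      Matrix.single i j (1 : ℂ)) := by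
    conv_lhs => rw [← Matrix.toLin'_toMatrix' T, Matrix.matrix_eq_sum_single (LinearMap.toMatrix' T)]
    simp [Matrix.smul_single]
  conv_lhs => rw [h]
  simp only [map_sum, map_smul, smul_eq_mul]
  rfl

/-- Coordinate ring of `G`. -/
def BB {m : ℕ} (G : Subgroup ((Fin m → ℂ) ≃ₗ[ℂ] (Fin m → ℂ))) : Subalgebra ℂ (G → ℂ) :=
  Algebra.adjoin ℂ (Set.range (fun ij : Fin m × Fin m => fun g : G => ent g.1 ij.1 ij.2) ∪
    Set.range (fun ij : Fin m × Fin m => fun g : G => ent g.1⁻¹ ij.1 ij.2))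

def bE {m : ℕ} (G : Subgroup ((Fin m → ℂ) ≃ₗ[ℂ] (Fin m → ℂ))) (i j : Fin m) : BB G :=
  ⟨fun g : G => ent g.1 i j, Algebra.subset_adjoin (Or.inl ⟨(i, j), rfl⟩)⟩

def bI {m : ℕ} (G : Subgroup ((Fin m → ℂ) ≃ₗ[ℂ] (Fin m → ℂ))) (i j : Fin m) : BB G :=
  ⟨fun g : G => ent g.1⁻¹ i j, Algebra.subset_adjoin (Or.inr ⟨(i, j), rfl⟩)⟩

lemma BB_finiteType {m : ℕ} (G : Subgroup ((Fin m → ℂ) ≃ₗ[ℂ] (Fin m → ℂ))) :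
    Algebra.FiniteType ℂ (BB G) := by
  rw [← Subalgebra.fg_iff_finiteType]
  have : (Set.range (fun ij : Fin m × Fin m => fun g : G => ent g.1 ij.1 ij.2) ∪
    Set.range (fun ij : Fin m × Fin m => fun g : G => ent g.1⁻¹ ij.1 ij.2)).Finite :=
    (Set.finite_range _).union (Set.finite_range _)
  exact ⟨this.toFinset, by rw [Set.Finite.coe_toFinset]; rfl⟩

lemma BB_chars {m : ℕ} (G : Subgroup ((Fin m → ℂ) ≃ₗ[ℂ] (Fin m → ℂ)))
    (Z : Set ((Fin m → ℂ) →ₗ[ℂ] (Fin m → ℂ))) (hZ : IsZariskiClosed Z)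
    (hG : ∀ φ : (Fin m → ℂ) ≃ₗ[ℂ] (Fin m → ℂ),
      φ ∈ G ↔ (φ : (Fin m → ℂ) →ₗ[ℂ] (Fin m → ℂ)) ∈ Z) (χ : BB G →ₐ[ℂ] ℂ) :
    ∃ g : G, ∀ b : BB G, χ b = b.1 g := by
  let M : Matrix (Fin m) (Fin m) ℂ := fun i j => χ (bE G i j)
  let N : Matrix (Fin m) (Fin m) ℂ := fun i j => χ (bI G i j)
  have hMN : M * N = 1 := by
    ext i j
    have h : ∑ l, bE G i l * bI G l j = algebraMap ℂ (BB G) ((1 : Matrix (Fin m) (Fin m) ℂ) i j) := by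
      apply Subtype.ext
      ext g
      rw [AddSubmonoidClass.coe_finsetSum, Finset.sum_apply]
      change ∑ l, ent g.1 i l * ent g.1⁻¹ l j = (1 : Matrix (Fin m) (Fin m) ℂ) i j
      rw [← ent_mul, mul_inv_cancel, ent_one]
    have h2 := congrArg χ h
    simp only [map_sum, map_mul, AlgHom.commutes] at h2
    simpa [Matrix.mul_apply] using h2
  have hNM : N * M = 1 := mul_eq_one_comm.1 hMN
  let g : (Fin m → ℂ) ≃ₗ[ℂ] (Fin m → ℂ) := LinearEquiv.ofLinearMap (Matrix.toLin' M) (Matrix.toLin' N)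
    (by rw [← Matrix.toLin'_mul, hMN, Matrix.toLin'_one])
    (by rw [← Matrix.toLin'_mul, hNM, Matrix.toLin'_one])
  have hgM : ∀ i j, ent g i j = M i j := by
    intro i j
    change (Matrix.toLin' M (Pi.single j 1)) i = _
    simp
  have hgN : ∀ i j, ent g⁻¹ i j = N i j := by
    intro i j
    change (Matrix.toLin' N (Pi.single j 1)) i = _
    simp
  have key : ∀ p : ((Fin m → ℂ) →ₗ[ℂ] (Fin m → ℂ)) → ℂ, IsPolyFun p →
      ∃ b : BB G, (∀ h : G, b.1 h = p (h.1 : (Fin m → ℂ) →ₗ[ℂ] (Fin m → ℂ))) ∧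
        χ b = p (g : (Fin m → ℂ) →ₗ[ℂ] (Fin m → ℂ)) := by
    intro p hp
    unfold IsPolyFun at hp
    induction hp using Algebra.adjoin_induction with
    | mem x hx =>
      obtain ⟨l, rfl⟩ := hx
      obtain ⟨c, hc⟩ := lin_end l
      refine ⟨∑ i, ∑ j, bE G i j * algebraMap ℂ (BB G) (c i j), fun h => ?_, ?_⟩
      · simp only [AddSubmonoidClass.coe_finsetSum, Finset.sum_apply]
        rw [hc]
        simp only [entL_eq]
        rfl
      · simp only [map_sum, map_mul, AlgHom.commutes]
        simp only [hc, entL_eq, hgM]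
        rfl
    | algebraMap r => exact ⟨algebraMap ℂ (BB G) r, fun h => rfl, by simp⟩
    | add x y _ _ hx hy =>
      obtain ⟨a, ha, ha'⟩ := hx; obtain ⟨b, hb, hb'⟩ := hy
      exact ⟨a + b, fun h => by simp [ha, hb], by simp [ha', hb']⟩
    | mul x y _ _ hx hy =>
      obtain ⟨a, ha, ha'⟩ := hx; obtain ⟨b, hb, hb'⟩ := hy
      exact ⟨a * b, fun h => by simp [ha, hb], by simp [ha', hb']⟩
  have hgG : g ∈ G := by
    rw [hG]
    obtain ⟨P, hP, rfl⟩ := hZ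
    intro p hp
    obtain ⟨b, hb, hb'⟩ := key p (hP p hp)
    have : b = 0 := by
      apply Subtype.ext
      ext h
      rw [hb]
      exact (hG h.1).1 h.2 p hp
    rw [← hb', this, map_zero]
  refine ⟨⟨g, hgG⟩, ?_⟩
  rintro ⟨b, hb⟩
  unfold BB at hb
  induction hb using Algebra.adjoin_induction with
  | mem x hx =>
    rcases hx with ⟨⟨i, j⟩, rfl⟩ | ⟨⟨i, j⟩, rfl⟩
    · exact (hgM i j).symm
    · exact (hgN i j).symm
  | algebraMap r => exact AlgHom.commutes χ r
  | add x y hx hy ihx ihy =>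
    exact (map_add χ ⟨x, hx⟩ ⟨y, hy⟩).trans (congrArg₂ (· + ·) ihx ihy)
  | mul x y hx hy ihx ihy =>
    exact (map_mul χ ⟨x, hx⟩ ⟨y, hy⟩).trans (congrArg₂ (· * ·) ihx ihy)

lemma stepA1 {m : ℕ} (G : Subgroup ((Fin m → ℂ) ≃ₗ[ℂ] (Fin m → ℂ)))
    (Z : Set ((Fin m → ℂ) →ₗ[ℂ] (Fin m → ℂ))) (hZ : IsZariskiClosed Z)
    (hG : ∀ φ : (Fin m → ℂ) ≃ₗ[ℂ] (Fin m → ℂ),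
      φ ∈ G ↔ (φ : (Fin m → ℂ) →ₗ[ℂ] (Fin m → ℂ)) ∈ Z)
    (v : Fin m → ℂ) (hv : ∀ φ ∈ G, φ v = v → φ = 1) :
    ∃ q : MvPolynomial (Fin m) ℂ, (∃ g ∈ G, MvPolynomial.eval (g v) q ≠ 0) ∧
      ∀ i j, ∃ f : MvPolynomial (Fin m) ℂ, ∀ g ∈ G,
        MvPolynomial.eval (g v) f = MvPolynomial.eval (g v) q * ent g i j := by
  classical
  let A : Subalgebra ℂ (G → ℂ) :=
    (MvPolynomial.aeval (R := ℂ) (fun i : Fin m => (fun g : G => g.1 v i))).range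
  have hAe : ∀ (p : MvPolynomial (Fin m) ℂ) (g : G),
      MvPolynomial.aeval (R := ℂ) (fun i : Fin m => (fun g : G => g.1 v i)) p g =
        MvPolynomial.eval (g.1 v) p := by
    intro p g
    induction p using MvPolynomial.induction_on with
    | C a => simp
    | add p q hp hq => simp [hp, hq]
    | mul_X p i hp => simp [hp]
  have hAB : A ≤ BB G := by
    rintro _ ⟨p, rfl⟩
    change MvPolynomial.aeval (R := ℂ) (fun i : Fin m => (fun g : G => g.1 v i)) p ∈ BB G
    induction p using MvPolynomial.induction_on with
    | C a =>
      rw [MvPolynomial.aeval_C]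
      exact Subalgebra.algebraMap_mem _ a
    | add p q hp hq => rw [map_add]; exact Subalgebra.add_mem _ hp hq
    | mul_X p i hp =>
      rw [map_mul]
      refine Subalgebra.mul_mem _ hp ?_
      rw [MvPolynomial.aeval_X]
      have h : (fun g : G => g.1 v i) = (∑ j, bE G i j * algebraMap ℂ (BB G) (v j) : BB G).1 := by
        ext g
        rw [AddSubmonoidClass.coe_finsetSum, Finset.sum_apply, ent_apply]
        rfl
      rw [h]
      exact Subtype.property _
  let _ : Algebra A (BB G) := (Subalgebra.inclusion hAB).toRingHom.toAlgebra
  have hmap : ∀ a : A, (algebraMap A (BB G) a).1 = a.1 := fun a => rfl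
  have : IsScalarTower ℂ A (BB G) := IsScalarTower.of_algebraMap_eq fun r => rfl
  have : Algebra.FiniteType ℂ (BB G) := BB_finiteType G
  have : IsReduced (BB G) := isReduced_of_injective (BB G).subtype Subtype.val_injective
  have hinj : Function.Injective (algebraMap A (BB G)) := by
    intro a b hab
    apply Subtype.ext
    rw [← hmap, ← hmap, hab]
  obtain ⟨a, ha, hs⟩ := conductor hinj (by
    intro χ₁ χ₂ hχ
    obtain ⟨g, hg⟩ := BB_chars G Z hZ hG χ₁
    obtain ⟨h, hh⟩ := BB_chars G Z hZ hG χ₂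
    have hgh : g.1 v = h.1 v := by
      ext i
      have := hχ ⟨_, ⟨MvPolynomial.X i, rfl⟩⟩
      rw [hg, hh, hmap] at this
      simpa using this
    have hgh' : h.1⁻¹ * g.1 = 1 := by
      apply hv _ (G.mul_mem (G.inv_mem h.2) g.2)
      change h.1⁻¹ (g.1 v) = v
      rw [hgh]
      exact h.1.symm_apply_apply v
    have : g = h := by
      apply Subtype.ext
      exact (inv_mul_eq_one.1 hgh').symm
    ext b
    rw [hg, hh, this]) (Finset.univ.image fun ij : Fin m × Fin m => bE G ij.1 ij.2)
  obtain ⟨q, hq⟩ := a.2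
  have hq' : ∀ g : G, a.1 g = MvPolynomial.eval (g.1 v) q := by
    intro g; rw [← hAe, ← hq]; rfl
  refine ⟨q, ?_, ?_⟩
  · by_contra hcon
    push Not at hcon
    apply ha
    apply Subtype.ext
    ext g
    rw [hq']
    exact hcon g.1 g.2
  · intro i j
    obtain ⟨c, hc⟩ := hs (bE G i j) (Finset.mem_image.2 ⟨(i, j), Finset.mem_univ _, rfl⟩)
    obtain ⟨f, hf⟩ := c.2
    refine ⟨f, fun g hg => ?_⟩
    have h1 : c.1 ⟨g, hg⟩ = a.1 ⟨g, hg⟩ * ent g i j := by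
      have := congrFun (congrArg Subtype.val hc) ⟨g, hg⟩
      exact this
    rw [hq', ← hf] at h1
    rw [← h1]
    exact (hAe f ⟨g, hg⟩).symm

/-! ### Nullstellensatz helpers -/

lemma nss_top {m : ℕ} (I : Ideal (MvPolynomial (Fin m) ℂ))
    (h : ∀ x : Fin m → ℂ, ∃ p ∈ I, MvPolynomial.eval x p ≠ 0) : (1 : MvPolynomial (Fin m) ℂ) ∈ I := by
  have h1 := MvPolynomial.vanishingIdeal_zeroLocus_eq_radical (K := ℂ) I
  have h2 : MvPolynomial.zeroLocus ℂ I = ∅ := by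
    ext x
    simp only [MvPolynomial.mem_zeroLocus_iff, Set.mem_empty_iff_false, iff_false]
    intro hx
    obtain ⟨p, hp, hne⟩ := h x
    exact hne (by simpa [MvPolynomial.aeval_eq_eval] using hx p hp)
  have h3 : (1 : MvPolynomial (Fin m) ℂ) ∈ I.radical := by
    rw [← h1, h2, MvPolynomial.mem_vanishingIdeal_iff]
    simp
  exact (Ideal.eq_top_iff_one I).1 (Ideal.radical_eq_top.1 ((Ideal.eq_top_iff_one _).2 h3))

lemma nss_prime {m : ℕ} (q : MvPolynomial (Fin m) ℂ) (hq : Irreducible q)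
    (p : MvPolynomial (Fin m) ℂ)
    (h : ∀ x : Fin m → ℂ, MvPolynomial.eval x q = 0 → MvPolynomial.eval x p = 0) : q ∣ p := by
  have h1 := MvPolynomial.vanishingIdeal_zeroLocus_eq_radical (K := ℂ) (Ideal.span {q})
  have hpr : (Ideal.span {q}).IsPrime := (Ideal.span_singleton_prime hq.ne_zero).2 hq.prime
  rw [hpr.radical] at h1
  rw [← Ideal.mem_span_singleton, ← h1, MvPolynomial.mem_vanishingIdeal_iff]
  intro x hx
  have h2 := (MvPolynomial.mem_zeroLocus_iff.1 hx) q (Ideal.mem_span_singleton_self q)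
  have h3 := h x (by simpa [MvPolynomial.aeval_eq_eval] using h2)
  simpa [MvPolynomial.aeval_eq_eval] using h3

lemma mv_comp {m : ℕ} (T : (Fin m → ℂ) ≃ₗ[ℂ] (Fin m → ℂ)) (p : MvPolynomial (Fin m) ℂ) :
    ∃ p' : MvPolynomial (Fin m) ℂ, ∀ x, MvPolynomial.eval x p' = MvPolynomial.eval (T x) p := by
  obtain ⟨p', hp'⟩ := (pf_iff _).1
    (pf_comp_lin (T : (Fin m → ℂ) →ₗ[ℂ] (Fin m → ℂ)) (pf_eval p))
  exact ⟨p', fun x => (hp' x).symm⟩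

lemma orbit_closed {m : ℕ} (S : Set (Fin m → ℂ)) (hS : IsZariskiClosed S) (x : Fin m → ℂ)
    (hx : ∀ q : MvPolynomial (Fin m) ℂ, (∀ y ∈ S, MvPolynomial.eval y q = 0) →
      MvPolynomial.eval x q = 0) : x ∈ S := by
  obtain ⟨P, hP, rfl⟩ := hS
  intro p hp
  obtain ⟨q, hq⟩ := (pf_iff p).1 (hP p hp)
  rw [hq]
  apply hx
  intro y hy
  rw [← hq]
  exact hy p hp

lemma stepA2 {m : ℕ} (G : Subgroup ((Fin m → ℂ) ≃ₗ[ℂ] (Fin m → ℂ)))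
    (Z : Set ((Fin m → ℂ) →ₗ[ℂ] (Fin m → ℂ))) (hZ : IsZariskiClosed Z)
    (hG : ∀ φ : (Fin m → ℂ) ≃ₗ[ℂ] (Fin m → ℂ),
      φ ∈ G ↔ (φ : (Fin m → ℂ) →ₗ[ℂ] (Fin m → ℂ)) ∈ Z)
    (v : Fin m → ℂ) (hcl : IsZariskiClosed {w | ∃ φ ∈ G, φ v = w})
    (hv : ∀ φ ∈ G, φ v = v → φ = 1) (i j : Fin m) :
    ∃ f : MvPolynomial (Fin m) ℂ, ∀ g ∈ G, MvPolynomial.eval (g v) f = ent g i j := by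
  obtain ⟨q0, ⟨g0, hg0, hq0⟩, hq0I⟩ := stepA1 G Z hZ hG v hv
  let I : Ideal (MvPolynomial (Fin m) ℂ) :=
    { carrier := {q | ∀ i j, ∃ f : MvPolynomial (Fin m) ℂ, ∀ g ∈ G,
        MvPolynomial.eval (g v) f = MvPolynomial.eval (g v) q * ent g i j}
      zero_mem' := fun i j => ⟨0, fun g _ => by simp⟩
      add_mem' := by
        intro a b ha hb i j
        obtain ⟨f, hf⟩ := ha i j
        obtain ⟨f', hf'⟩ := hb i j
        exact ⟨f + f', fun g hg => by rw [map_add, hf g hg, hf' g hg, map_add, add_mul]⟩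
      smul_mem' := by
        intro c a ha i j
        obtain ⟨f, hf⟩ := ha i j
        exact ⟨c * f, fun g hg => by rw [map_mul, hf g hg, smul_eq_mul, map_mul, mul_assoc]⟩ }
  have hI : ∀ q, q ∈ I ↔ ∀ i j, ∃ f : MvPolynomial (Fin m) ℂ, ∀ g ∈ G,
        MvPolynomial.eval (g v) f = MvPolynomial.eval (g v) q * ent g i j := fun q => Iff.rfl
  have h1 : (1 : MvPolynomial (Fin m) ℂ) ∈ I := by
    apply nss_top
    intro x
    by_contra hcon
    push Not at hcon
    have hx : x ∈ {w | ∃ φ ∈ G, φ v = w} := by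
      apply orbit_closed _ hcl
      intro q hq
      apply hcon
      intro i j
      exact ⟨0, fun g hg => by rw [hq (g v) ⟨g, hg, rfl⟩]; simp⟩
    obtain ⟨h, hh, rfl⟩ := hx
    set k := g0 * h⁻¹ with hk
    have hkG : k ∈ G := G.mul_mem hg0 (G.inv_mem hh)
    obtain ⟨q', hq'⟩ := mv_comp k q0
    have hk0 : k (h v) = g0 v := by
      change g0 (h⁻¹ (h v)) = _
      congr 1
      exact h.symm_apply_apply v
    apply hq0
    rw [← hk0, ← hq']
    apply hcon
    intro i j
    choose f hf using hq0I
    choose f' hf' using fun l => mv_comp k (f l j)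
    refine ⟨∑ l, MvPolynomial.C (ent k⁻¹ i l) * f' l, fun g hg => ?_⟩
    have e : ent g i j = ∑ l, ent k⁻¹ i l * ent (k * g) l j := by
      rw [← ent_mul, inv_mul_cancel_left]
    simp only [map_sum, map_mul, MvPolynomial.eval_C]
    rw [e, Finset.mul_sum]
    refine Finset.sum_congr rfl fun l _ => ?_
    rw [hf', hq']
    have := hf l j (k * g) (G.mul_mem hkG hg)
    rw [LinearEquiv.mul_apply] at this
    rw [this]; ring
  obtain ⟨f, hf⟩ := h1 i j
  exact ⟨f, fun g hg => by rw [hf g hg]; simp⟩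

lemma stepB {m : ℕ} (G : Subgroup ((Fin m → ℂ) ≃ₗ[ℂ] (Fin m → ℂ)))
    (hred : IsReductiveSubgroup G)
    (v : Fin m → ℂ) (hcl : IsZariskiClosed {w | ∃ φ ∈ G, φ v = w})
    (hv : ∀ φ ∈ G, φ v = v → φ = 1) :
    ∃ F : Fin m → Fin m → MvPolynomial (Fin m) ℂ,
      (∀ i j, MvPolynomial.eval v (F i j) = (1 : Matrix (Fin m) (Fin m) ℂ) i j) ∧
      ∀ h ∈ G, ∀ x i j, MvPolynomial.eval (h x) (F i j) =
        ∑ l, ent h i l * MvPolynomial.eval x (F l j) := by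
  obtain ⟨⟨Z, hZ, hG⟩, hlr⟩ := hred
  choose f hf using fun ij : Fin m × Fin m => stepA2 G Z hZ hG v hcl hv ij.1 ij.2
  obtain ⟨d, hd⟩ := exists_stable (fun ij => fun x => MvPolynomial.eval x (f ij))
    (fun ij => pf_eval _)
  have : FiniteDimensional ℂ (LL m ^ d : Submodule ℂ ((Fin m → ℂ) → ℂ)) :=
    Module.Finite.iff_fg.2 (LL_fg m d)
  let K : Submodule ℂ ((Fin m → ℂ) → ℂ) :=
    { carrier := {w | w ∈ LL m ^ d ∧ ∀ g ∈ G, w (g v) = 0}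
      zero_mem' := ⟨Submodule.zero_mem _, fun _ _ => rfl⟩
      add_mem' := fun {a b} ha hb => ⟨Submodule.add_mem _ ha.1 hb.1, fun g hg => by
        rw [Pi.add_apply, ha.2 g hg, hb.2 g hg, add_zero]⟩
      smul_mem' := fun c a ha => ⟨Submodule.smul_mem _ c ha.1, fun g hg => by
        rw [Pi.smul_apply, ha.2 g hg, smul_zero]⟩ }
  obtain ⟨C, hCW, hCst, hdis, hsum⟩ := compl_lemma G hlr (LL m ^ d) (fun f hf => LL_pf d f hf)
    (fun g _ f hf => LL_stable d g f hf) K (fun _ h => h.1)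
    (fun g hg w hw => ⟨LL_stable d g w hw.1, fun h hh => hw.2 (g * h) (G.mul_mem hg hh)⟩)
  choose a ha b hb hab using fun ij => hsum _ (hd ij)
  have hbv : ∀ ij, ∀ g ∈ G, b ij (g v) = ent g ij.1 ij.2 := by
    intro ij g hg
    have h1 := congrFun (hab ij) (g v)
    simp only [Pi.add_apply] at h1
    rw [hf ij g hg, (ha ij).2 g hg, zero_add] at h1
    exact h1.symm
  choose F hF using fun ij => (pf_iff (b ij)).1 (LL_pf d _ (hCW (hb ij)))
  refine ⟨fun i j => F (i, j), fun i j => ?_, fun h hh x i j => ?_⟩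
  · rw [← hF]
    have := hbv (i, j) 1 G.one_mem
    rw [ent_one] at this
    exact this
  · simp only [← hF]
    have key : (fun x => b (i, j) (h x)) - ∑ l, ent h i l • b (l, j) = 0 := by
      have hC : (fun x => b (i, j) (h x)) - ∑ l, ent h i l • b (l, j) ∈ C :=
        Submodule.sub_mem _ (hCst h hh _ (hb _))
          (Submodule.sum_mem _ fun l _ => Submodule.smul_mem _ _ (hb _))
      refine hdis _ ⟨hCW hC, fun g hg => ?_⟩ hC
      simp only [Pi.sub_apply, Finset.sum_apply, Pi.smul_apply, smul_eq_mul]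
      have h1 := hbv (i, j) (h * g) (G.mul_mem hh hg)
      rw [LinearEquiv.mul_apply, ent_mul] at h1
      rw [h1, sub_eq_zero]
      exact Finset.sum_congr rfl fun l _ => by rw [hbv _ g hg]
    have h2 := congrFun key x
    simpa [sub_eq_zero] using h2

lemma separation {m : ℕ} (G : Subgroup ((Fin m → ℂ) ≃ₗ[ℂ] (Fin m → ℂ)))
    (hlr : IsLinearlyReductive G)
    (v u : Fin m → ℂ) (hv : IsZariskiClosed {w | ∃ φ ∈ G, φ v = w})
    (hu : IsZariskiClosed {w | ∃ φ ∈ G, φ u = w})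
    (huv : ∀ c : (Fin m → ℂ) → ℂ, IsPolyFun c → (∀ g ∈ G, ∀ x, c (g x) = c x) → c u = c v) :
    ∃ g ∈ G, g v = u := by
  by_contra hcon
  -- a polynomial vanishing on the first orbit, equal to one on the second
  have hf : ∃ f : MvPolynomial (Fin m) ℂ, (∀ g ∈ G, MvPolynomial.eval (g v) f = 0) ∧
      ∀ g ∈ G, MvPolynomial.eval (g u) f = 1 := by
    let I := vanishingIdeal m {w | ∃ φ ∈ G, φ v = w}
    let J := vanishingIdeal m {w | ∃ φ ∈ G, φ u = w}
    have h1 : (1 : MvPolynomial (Fin m) ℂ) ∈ I ⊔ J := by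
      apply nss_top
      intro x
      by_contra hx
      push Not at hx
      obtain ⟨g, hg, rfl⟩ := orbit_closed _ hv x fun q hq =>
        hx q (Ideal.mem_sup_left (show q ∈ I from hq))
      obtain ⟨h, hh, he⟩ := orbit_closed _ hu _ fun q hq =>
        hx q (Ideal.mem_sup_right (show q ∈ J from hq))
      refine hcon ⟨h⁻¹ * g, G.mul_mem (G.inv_mem hh) hg, ?_⟩
      change h⁻¹ (g v) = u
      rw [← he]
      exact h.symm_apply_apply u
    obtain ⟨a, ha, b, hb, hab⟩ := Submodule.mem_sup.1 h1
    refine ⟨a, fun g hg => ha _ ⟨g, hg, rfl⟩, fun g hg => ?_⟩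
    have h2 : MvPolynomial.eval (g u) b = 0 := hb _ ⟨g, hg, rfl⟩
    have h3 := congrArg (MvPolynomial.eval (g u)) hab
    simpa [h2] using h3
  obtain ⟨f, hfv, hfu⟩ := hf
  obtain ⟨d, hd⟩ := pf_LL _ (pf_eval f)
  let W : Submodule ℂ ((Fin m → ℂ) → ℂ) :=
    { carrier := {w | w ∈ LL m ^ d ∧ (∀ g ∈ G, w (g v) = 0) ∧ ∀ g ∈ G, w (g u) = w u}
      zero_mem' := ⟨Submodule.zero_mem _, fun _ _ => rfl, fun _ _ => rfl⟩
      add_mem' := fun {a b} ha hb => ⟨Submodule.add_mem _ ha.1 hb.1, fun g hg => by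
        rw [Pi.add_apply, ha.2.1 g hg, hb.2.1 g hg, add_zero], fun g hg => by
        rw [Pi.add_apply, ha.2.2 g hg, hb.2.2 g hg, Pi.add_apply]⟩
      smul_mem' := fun c a ha => ⟨Submodule.smul_mem _ c ha.1, fun g hg => by
        rw [Pi.smul_apply, ha.2.1 g hg, smul_zero], fun g hg => by
        rw [Pi.smul_apply, ha.2.2 g hg, Pi.smul_apply]⟩ }
  have hWle : W ≤ LL m ^ d := fun w hw => hw.1
  have hfd : FiniteDimensional ℂ (LL m ^ d : Submodule ℂ ((Fin m → ℂ) → ℂ)) :=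
    Module.Finite.iff_fg.2 (LL_fg m d)
  have : FiniteDimensional ℂ W := Submodule.finiteDimensional_of_le hWle
  let K : Submodule ℂ ((Fin m → ℂ) → ℂ) :=
    { carrier := {w | w ∈ W ∧ w u = 0}
      zero_mem' := ⟨Submodule.zero_mem _, rfl⟩
      add_mem' := fun {a b} ha hb => ⟨Submodule.add_mem _ ha.1 hb.1, by
        rw [Pi.add_apply, ha.2, hb.2, add_zero]⟩
      smul_mem' := fun c a ha => ⟨Submodule.smul_mem _ c ha.1, by
        rw [Pi.smul_apply, ha.2, smul_zero]⟩ }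
  have hWst : ∀ g ∈ G, ∀ w ∈ W, (fun x => w (g x)) ∈ W := by
    intro g hg w hw
    refine ⟨LL_stable d g w hw.1, fun h hh => hw.2.1 (g * h) (G.mul_mem hg hh), fun h hh => ?_⟩
    exact (hw.2.2 (g * h) (G.mul_mem hg hh)).trans (hw.2.2 g hg).symm
  obtain ⟨C, hCW, hCst, hdis, hsum⟩ := compl_lemma G hlr W (fun f hf => LL_pf d f hf.1)
    hWst K (fun _ h => h.1)
    (fun g hg w hw => ⟨hWst g hg w hw.1, (hw.1.2.2 g hg).trans hw.2⟩)
  obtain ⟨a, ha, c, hc, hac⟩ := hsum (fun x => MvPolynomial.eval x f)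
    ⟨hd, hfv, fun g hg => (hfu g hg).trans (hfu 1 G.one_mem).symm⟩
  have hcu : c u = 1 := by
    have h1 := congrFun hac u
    simp only [Pi.add_apply, ha.2, zero_add] at h1
    rw [← h1]
    exact hfu 1 G.one_mem
  have hcv : c v = 0 := (hCW hc).2.1 1 G.one_mem
  have hinv : ∀ g ∈ G, ∀ x, c (g x) = c x := by
    intro g hg x
    have h1 : (fun x => c (g x)) - c ∈ C := Submodule.sub_mem _ (hCst g hg c hc) hc
    have h2 := hdis _ ⟨hCW h1, by
      rw [Pi.sub_apply, (hCW hc).2.2 g hg, sub_self]⟩ h1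
    exact sub_eq_zero.1 (congrFun h2 x)
  have := huv c (LL_pf d c (hCW hc).1) hinv
  rw [hcu, hcv] at this
  exact one_ne_zero this

/-! ### The main argument -/

def mlin {m : ℕ} (M : Fin m → Fin m → ℂ) : (Fin m → ℂ) →ₗ[ℂ] (Fin m → ℂ) :=
  Matrix.toLin' (Matrix.of M)

lemma mlin_ent {m : ℕ} (g : (Fin m → ℂ) ≃ₗ[ℂ] (Fin m → ℂ)) :
    mlin (fun i j => ent g i j) = (g : (Fin m → ℂ) →ₗ[ℂ] (Fin m → ℂ)) := by
  apply LinearMap.ext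
  intro x
  ext i
  rw [LinearEquiv.coe_coe, ent_apply]
  simp [mlin, Matrix.mulVec, dotProduct]

lemma entL_mlin {m : ℕ} (M : Fin m → Fin m → ℂ) (i j : Fin m) :
    entL i j (mlin M) = M i j := by
  simp [entL, mlin]

lemma local_rational {m : ℕ} (G : Subgroup ((Fin m → ℂ) ≃ₗ[ℂ] (Fin m → ℂ)))
    (hred : IsReductiveSubgroup G) (φ : (Fin m → ℂ) ≃ₗ[ℂ] (Fin m → ℂ))
    (U0 : Set (Fin m → ℂ)) (γ : (Fin m → ℂ) → ((Fin m → ℂ) ≃ₗ[ℂ] (Fin m → ℂ)))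
    (hγ : ∀ x ∈ U0, γ x ∈ G ∧ γ x x = φ x) (v : Fin m → ℂ)
    (hcl : IsZariskiClosed {w | ∃ φ ∈ G, φ v = w})
    (hv : ∀ φ ∈ G, φ v = v → φ = 1) (i j : Fin m) :
    ∃ d N : MvPolynomial (Fin m) ℂ, MvPolynomial.eval v d ≠ 0 ∧
      ∀ x ∈ U0, ent (γ x) i j * MvPolynomial.eval x d = MvPolynomial.eval x N := by
  obtain ⟨F, hF1, hF2⟩ := stepB G hred v hcl hv
  choose Fφ hFφ using fun i j => mv_comp φ (F i j)
  let Fm : Matrix (Fin m) (Fin m) (MvPolynomial (Fin m) ℂ) := F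
  let Fn : Matrix (Fin m) (Fin m) (MvPolynomial (Fin m) ℂ) := Fφ
  refine ⟨Fm.det, (Fn * Fm.adjugate) i j, ?_, fun x hx => ?_⟩
  · rw [RingHom.map_det]
    have : (MvPolynomial.eval v).mapMatrix Fm = 1 := by
      ext i j
      exact hF1 i j
    rw [this, Matrix.det_one]
    exact one_ne_zero
  · obtain ⟨hg, hgx⟩ := hγ x hx
    let Γ : Matrix (Fin m) (Fin m) ℂ := fun i j => ent (γ x) i j
    set E := (MvPolynomial.eval x).mapMatrix Fm with hE
    have h1 : (MvPolynomial.eval x).mapMatrix Fn = Γ * E := by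
      ext a b
      rw [Matrix.mul_apply]
      change MvPolynomial.eval x (Fφ a b) = ∑ l, ent (γ x) a l * MvPolynomial.eval x (F l b)
      rw [hFφ, ← hgx, hF2 _ hg]
    have h2 : MvPolynomial.eval x ((Fn * Fm.adjugate) i j) = (Γ * E * E.adjugate) i j := by
      rw [← h1, hE, ← RingHom.map_adjugate, ← map_mul]; rfl
    rw [h2, RingHom.map_det, mul_assoc, Matrix.mul_adjugate, ← hE, Matrix.mul_smul, Matrix.mul_one]
    exact mul_comm _ _

lemma conclude {m : ℕ} (Z : Set ((Fin m → ℂ) →ₗ[ℂ] (Fin m → ℂ))) (hZ : IsZariskiClosed Z)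
    (φ : (Fin m → ℂ) ≃ₗ[ℂ] (Fin m → ℂ))
    (U0 : Set (Fin m → ℂ)) (γ : (Fin m → ℂ) → ((Fin m → ℂ) ≃ₗ[ℂ] (Fin m → ℂ)))
    (hγ : ∀ x ∈ U0, ((γ x : (Fin m → ℂ) →ₗ[ℂ] (Fin m → ℂ)) ∈ Z) ∧ γ x x = φ x)
    (hdense : ∀ p : MvPolynomial (Fin m) ℂ, (∀ x ∈ U0, MvPolynomial.eval x p = 0) → p = 0)
    (Q : Fin m → Fin m → MvPolynomial (Fin m) ℂ)
    (hQ : ∀ i j, ∀ x ∈ U0, ent (γ x) i j = MvPolynomial.eval x (Q i j)) :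
    (φ : (Fin m → ℂ) →ₗ[ℂ] (Fin m → ℂ)) ∈ Z := by
  have h1 : ∀ x i, ∑ j, ent φ i j * x j = ∑ j, MvPolynomial.eval x (Q i j) * x j := by
    intro x i
    have := hdense (∑ j, MvPolynomial.C (ent φ i j) * MvPolynomial.X j
      - ∑ j, Q i j * MvPolynomial.X j) (by
        intro x hx
        simp only [map_sub, map_sum, map_mul, MvPolynomial.eval_C, MvPolynomial.eval_X]
        rw [← ent_apply, ← (hγ x hx).2, ent_apply, sub_eq_zero]
        exact Finset.sum_congr rfl fun j _ => by rw [hQ i j x hx])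
    have h2 := congrArg (MvPolynomial.eval x) this
    simpa [sub_eq_zero] using h2
  have h2 : ∀ i j, ent φ i j = MvPolynomial.eval 0 (Q i j) := by
    intro i j
    have hc : Continuous fun t : ℂ => MvPolynomial.eval (Pi.single j t : Fin m → ℂ) (Q i j) :=
      (MvPolynomial.continuous_eval (Q i j)).comp (continuous_single (A := fun _ : Fin m => ℂ) j)
    have he := Continuous.ext_on (dense_compl_singleton (0 : ℂ)) (continuous_const
      (y := ent φ i j)) hc (by
        intro t ht
        have h3 := h1 (Pi.single j t) i
        simp only [Pi.single_apply, mul_ite, mul_zero, Finset.sum_ite_eq', Finset.mem_univ,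
          if_true] at h3
        exact mul_right_cancel₀ ht h3)
    have := congrFun he 0
    simpa using this
  obtain ⟨P, hP, rfl⟩ := hZ
  intro p hp
  have h3 : IsPolyFun (fun x : Fin m → ℂ => p (mlin fun i j => MvPolynomial.eval x (Q i j))) := by
    refine pf_comp _ (fun l => ?_) (hP p hp)
    obtain ⟨c, hc⟩ := lin_end l
    simp only [hc, entL_mlin]
    exact pf_sum _ _ fun i _ => pf_sum _ _ fun j _ => pf_mul (pf_eval _) (pf_const _)
  obtain ⟨r, hr⟩ := (pf_iff _).1 h3
  have hr0 : r = 0 := by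
    apply hdense
    intro x hx
    rw [← hr]
    simp only [← hQ _ _ x hx]
    rw [mlin_ent]
    exact (hγ x hx).1 p hp
  have h4 := hr 0
  simp only [← h2] at h4
  rw [mlin_ent, hr0, map_zero] at h4
  exact h4

def tr {m : ℕ} (ψ : (Fin m → ℂ) ≃ₗ[ℂ] (Fin m → ℂ)) :
    MvPolynomial (Fin m) ℂ →ₐ[ℂ] MvPolynomial (Fin m) ℂ :=
  MvPolynomial.aeval fun i => ∑ j, MvPolynomial.C (ent ψ i j) * MvPolynomial.X j

lemma tr_eval {m : ℕ} (ψ : (Fin m → ℂ) ≃ₗ[ℂ] (Fin m → ℂ)) (p : MvPolynomial (Fin m) ℂ)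
    (x : Fin m → ℂ) : MvPolynomial.eval x (tr ψ p) = MvPolynomial.eval (ψ x) p := by
  induction p using MvPolynomial.induction_on with
  | C a => simp [tr]
  | add p q hp hq => simp [hp, hq]
  | mul_X p i hp =>
    rw [map_mul, map_mul, map_mul, hp, MvPolynomial.eval_X, ent_apply]
    simp [tr]

def trE {m : ℕ} (ψ : (Fin m → ℂ) ≃ₗ[ℂ] (Fin m → ℂ)) :
    MvPolynomial (Fin m) ℂ ≃ₐ[ℂ] MvPolynomial (Fin m) ℂ :=
  AlgEquiv.ofAlgHom (tr ψ.symm) (tr ψ)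
    (AlgHom.ext fun p => MvPolynomial.funext fun x => by
      simp only [AlgHom.comp_apply, tr_eval, AlgHom.id_apply]
      rw [ψ.apply_symm_apply])
    (AlgHom.ext fun p => MvPolynomial.funext fun x => by
      simp only [AlgHom.comp_apply, tr_eval, AlgHom.id_apply]
      rw [ψ.symm_apply_apply])

lemma main_result {m : ℕ} (G : Subgroup ((Fin m → ℂ) ≃ₗ[ℂ] (Fin m → ℂ)))
    (hred : IsReductiveSubgroup G)
    (U : Set (Fin m → ℂ))
    (hU : U = {v | IsZariskiClosed {w | ∃ φ ∈ G, φ v = w} ∧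
      ∀ φ ∈ G, φ v = v → φ = 1})
    (hcodim : ringKrullDim (MvPolynomial (Fin m) ℂ ⧸ vanishingIdeal m (Set.univ \ U)) + 2
      ≤ (m : WithBot (WithTop ℕ))) :
    primeGroup G = G := by
  apply le_antisymm
  swap
  · intro g hg f _ hinv v
    exact hinv g hg v
  intro φ hφ
  obtain ⟨⟨Z, hZ, hG⟩, hlr⟩ := id hred
  set I := vanishingIdeal m (Set.univ \ U) with hI
  have hImem : ∀ p ∈ I, ∀ x, x ∉ U → MvPolynomial.eval x p = 0 := fun p hp x hx => hp x ⟨trivial, hx⟩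
  let U0 : Set (Fin m → ℂ) := {x | x ∈ U ∧ φ x ∈ U}
  have hex : ∀ x, ∃ g : (Fin m → ℂ) ≃ₗ[ℂ] (Fin m → ℂ), x ∈ U0 → g ∈ G ∧ g x = φ x := by
    intro x
    by_cases hx : x ∈ U0
    · have hx1 := hx.1
      have hx2 := hx.2
      rw [hU] at hx1 hx2
      obtain ⟨g, hg, hgx⟩ := separation G hlr x (φ x) hx1.1 hx2.1
        (fun c hc hinv => hφ c hc hinv x)
      exact ⟨g, fun _ => ⟨hg, hgx⟩⟩
    · exact ⟨1, fun h => absurd h hx⟩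
  choose γ hγ using hex
  have hdense : ∀ p : MvPolynomial (Fin m) ℂ, (∀ x ∈ U0, MvPolynomial.eval x p = 0) → p = 0 := by
    intro p hp
    obtain ⟨q, hq, hq0⟩ := Submodule.exists_mem_ne_zero_of_ne_bot (codim_ne_bot I hcodim)
    obtain ⟨q', hq'⟩ := mv_comp φ q
    have hqz : q' ≠ 0 := by
      rintro rfl
      apply hq0
      apply MvPolynomial.funext
      intro x
      have := hq' (φ.symm x)
      rw [φ.apply_symm_apply] at this
      rw [← this]; simp
    have h : p * (q * q') = 0 := by
      apply MvPolynomial.funext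
      intro x
      simp only [map_mul, map_zero]
      by_cases h1 : x ∈ U
      · by_cases h2 : φ x ∈ U
        · rw [hp x ⟨h1, h2⟩, zero_mul]
        · rw [hq', hImem q hq _ h2]; simp
      · rw [hImem q hq _ h1]; simp
    exact (mul_eq_zero.1 h).resolve_right (mul_ne_zero hq0 hqz)
  have hirr : ∀ q : MvPolynomial (Fin m) ℂ, Irreducible q →
      ∃ x ∈ U0, MvPolynomial.eval x q = 0 := by
    intro q hq
    by_contra hcon
    push Not at hcon
    obtain ⟨a, ha, haq⟩ := Set.not_subset.1 (codim_irr I hcodim q hq)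
    -- the transported irreducible polynomial
    let e : MvPolynomial (Fin m) ℂ ≃ₐ[ℂ] MvPolynomial (Fin m) ℂ := trE φ
    have he : ∀ p x, MvPolynomial.eval (φ x) (e p) = MvPolynomial.eval x p := by
      intro p x
      have := tr_eval φ.symm p (φ x)
      rwa [φ.symm_apply_apply] at this
    have hqe : Irreducible (e q) := (MulEquiv.irreducible_iff e).2 hq
    obtain ⟨b, hb, hbq⟩ := Set.not_subset.1 (codim_irr I hcodim (e q) hqe)
    obtain ⟨b', hb'⟩ := mv_comp φ b
    have hdvd : q ∣ a * b' := by
      apply nss_prime q hq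
      intro x hx
      rw [map_mul]
      by_cases h1 : x ∈ U
      · by_cases h2 : φ x ∈ U
        · exact absurd hx (hcon x ⟨h1, h2⟩)
        · rw [hb', hImem b hb _ h2, mul_zero]
      · rw [hImem a ha _ h1, zero_mul]
    rcases hq.prime.dvd_or_dvd hdvd with h | h
    · exact haq (Ideal.mem_span_singleton.2 h)
    · apply hbq
      apply Ideal.mem_span_singleton.2
      apply nss_prime _ hqe
      intro y hy
      obtain ⟨x, rfl⟩ := φ.surjective y
      rw [he] at hy
      obtain ⟨c, hc⟩ := h
      rw [← hb', hc, map_mul, hy, zero_mul]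
  have hQ : ∀ i j, ∃ Q : MvPolynomial (Fin m) ℂ, ∀ x ∈ U0, ent (γ x) i j = MvPolynomial.eval x Q := by
    intro i j
    refine hartogs U0 hdense hirr (fun x => ent (γ x) i j) fun x0 hx0 => ?_
    have hx1 := hx0.1
    rw [hU] at hx1
    exact local_rational G hred φ U0 γ hγ x0 hx1.1 hx1.2 i j
  choose Q hQ using hQ
  rw [hG]
  exact conclude Z hZ φ U0 γ (fun x hx => ⟨(hG _).1 (hγ x hx).1, (hγ x hx).2⟩) hdense Q hQ

/-- Let `V` be a finite-dimensional complex vector space (realized as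
`ℂⁿ`), `G ⊆ GL(V)` a reductive subgroup, and `U ⊆ V` the set of points whose `G`-orbit
is (Zariski) closed and whose `G`-stabilizer is trivial.  If the complement `V \ U` has
codimension at least 2 in `V` (the coordinate ring of its Zariski closure has Krull
dimension at most `n - 2`), then `G' = G`. -/
theorem stmt10 (G : Subgroup ((Fin n → ℂ) ≃ₗ[ℂ] (Fin n → ℂ)))
    (hred : IsReductiveSubgroup G)
    (U : Set (Fin n → ℂ))
    (hU : U = {v | IsZariskiClosed {w | ∃ φ ∈ G, φ v = w} ∧
      ∀ φ ∈ G, φ v = v → φ = 1})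
    (hcodim : ringKrullDim (MvPolynomial (Fin n) ℂ ⧸ vanishingIdeal n (Set.univ \ U)) + 2
      ≤ (n : WithBot (WithTop ℕ))) :
    primeGroup G = G := by
  exact main_result G hred U hU hcodim

end Stmt10
end
end

section
/- Let G = SL₂(ℂ) act on V = R₃ = Sym³(ℂ²), its 4-dimensional irreducible representation. Then G' equals the image in GL(V) of the group {g ∈ GL₂(ℂ) : det(g) = ±1} acting on Sym³(ℂ²). Equivalently, G'/G is generated by scalar multiplication by i on R₃. -/
noncomputable section

namespace Stmt17

/-- A representation of `SL₂(ℂ)` is polynomial (algebraic) if all its matrix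
coefficients are polynomial functions of the matrix entries. -/
def IsPolynomialRep {W : Type} [AddCommGroup W] [Module ℂ W]
    (ρ : Matrix.SpecialLinearGroup (Fin 2) ℂ →* (W ≃ₗ[ℂ] W)) : Prop :=
  ∀ (l : W →ₗ[ℂ] ℂ) (w : W), ∃ p : MvPolynomial (Fin 2 × Fin 2) ℂ,
    ∀ g : Matrix.SpecialLinearGroup (Fin 2) ℂ,
      l (ρ g w) = MvPolynomial.eval (fun ij => (g : Matrix (Fin 2) (Fin 2) ℂ) ij.1 ij.2) p

/-- Irreducibility of a representation. -/
def IsIrreducibleRep {W : Type} [AddCommGroup W] [Module ℂ W]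
    (ρ : Matrix.SpecialLinearGroup (Fin 2) ℂ →* (W ≃ₗ[ℂ] W)) : Prop :=
  ∀ U : Submodule ℂ W, (∀ g : Matrix.SpecialLinearGroup (Fin 2) ℂ, ∀ w ∈ U, ρ g w ∈ U) →
    U = ⊥ ∨ U = ⊤

open Matrix in
abbrev SL := Matrix.SpecialLinearGroup (Fin 2) ℂ

abbrev V4 := Fin 4 → ℂ

def lo (x : ℂ) : SL := ⟨!![1, 0; x, 1], by simp [Matrix.det_fin_two]⟩
def up (x : ℂ) : SL := ⟨!![1, x; 0, 1], by simp [Matrix.det_fin_two]⟩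
def tor (t : ℂ) (h : t ≠ 0) : SL := ⟨!![t, 0; 0, t⁻¹], by simp [Matrix.det_fin_two, h]⟩
def wl : SL := ⟨!![0, -1; 1, 0], by simp [Matrix.det_fin_two]⟩

@[simp] lemma lo00 (x : ℂ) : lo x 0 0 = 1 := rfl
@[simp] lemma lo01 (x : ℂ) : lo x 0 1 = 0 := rfl
@[simp] lemma lo10 (x : ℂ) : lo x 1 0 = x := rfl
@[simp] lemma lo11 (x : ℂ) : lo x 1 1 = 1 := rfl
@[simp] lemma up00 (x : ℂ) : up x 0 0 = 1 := rfl
@[simp] lemma up01 (x : ℂ) : up x 0 1 = x := rfl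
@[simp] lemma up10 (x : ℂ) : up x 1 0 = 0 := rfl
@[simp] lemma up11 (x : ℂ) : up x 1 1 = 1 := rfl
@[simp] lemma tor00 (x : ℂ) (h : x ≠ 0) : tor x h 0 0 = x := rfl
@[simp] lemma tor01 (x : ℂ) (h : x ≠ 0) : tor x h 0 1 = 0 := rfl
@[simp] lemma tor10 (x : ℂ) (h : x ≠ 0) : tor x h 1 0 = 0 := rfl
@[simp] lemma tor11 (x : ℂ) (h : x ≠ 0) : tor x h 1 1 = x⁻¹ := rfl
@[simp] lemma wl00 : wl 0 0 = 0 := rfl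
@[simp] lemma wl01 : wl 0 1 = -1 := rfl
@[simp] lemma wl10 : wl 1 0 = 1 := rfl
@[simp] lemma wl11 : wl 1 1 = 0 := rfl

lemma SL_mul (g h : SL) (i j : Fin 2) : (g * h) i j = g i 0 * h 0 j + g i 1 * h 1 j := by
  rw [Matrix.SpecialLinearGroup.coe_mul, Matrix.mul_apply, Fin.sum_univ_two]

lemma SL_ext (g h : SL) (h1 : g 0 0 = h 0 0) (h2 : g 0 1 = h 0 1) (h3 : g 1 0 = h 1 0)
    (h4 : g 1 1 = h 1 1) : g = h := by
  ext i j
  fin_cases i <;> fin_cases j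
  exacts [h1, h2, h3, h4]

lemma SL_det (g : SL) : g 0 0 * g 1 1 - g 0 1 * g 1 0 = 1 := by
  have := g.2
  rwa [Matrix.det_fin_two] at this

lemma coeff_zero {E : Type*} [AddCommGroup E] [Module ℂ E] (S : Set ℂ) (hS : S.Infinite)
    (N : ℕ) (w : ℕ → E) (h : ∀ y ∈ S, ∑ k ∈ Finset.range N, y ^ k • w k = 0) :
    ∀ k < N, w k = 0 := by
  intro k hk
  rw [← Module.forall_dual_apply_eq_zero_iff ℂ]
  intro f
  set P : Polynomial ℂ := ∑ k ∈ Finset.range N, Polynomial.C (f (w k)) * Polynomial.X ^ k with hP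
  have hP0 : P = 0 := by
    apply Polynomial.eq_zero_of_infinite_isRoot
    refine hS.mono ?_
    intro y hy
    have := congrArg f (h y hy)
    simp only [map_sum, map_smul, smul_eq_mul, map_zero] at this
    simp only [Set.mem_ofPred_eq, Polynomial.IsRoot, hP, Polynomial.eval_finsetSum]
    rw [← this]
    apply Finset.sum_congr rfl
    intro i _
    rw [Polynomial.eval_mul, Polynomial.eval_pow, Polynomial.eval_C, Polynomial.eval_X, mul_comm]
  have := congrArg (fun p => Polynomial.coeff p k) hP0
  simpa [hP, Polynomial.finsetSum_coeff, Polynomial.coeff_X_pow, hk] using this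

lemma inf_ne (a : ℂ) : ({y : ℂ | y ≠ a}).Infinite := by
  have : ({y : ℂ | y ≠ a}) = ({a} : Set ℂ)ᶜ := by ext; simp
  rw [this]
  exact (Set.finite_singleton a).infinite_compl

lemma coeff_mem {E : Type*} [AddCommGroup E] [Module ℂ E] (W : Submodule ℂ E)
    (S : Set ℂ) (hS : S.Infinite)
    (N : ℕ) (w : ℕ → E) (h : ∀ y ∈ S, ∑ k ∈ Finset.range N, y ^ k • w k ∈ W) :
    ∀ k < N, w k ∈ W := by
  intro k hk
  have := coeff_zero S hS N (fun k => W.mkQ (w k)) (by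
    intro y hy
    have := (Submodule.Quotient.mk_eq_zero W).2 (h y hy)
    rw [← Submodule.mkQ_apply] at this
    simpa using this) k hk
  simpa using this

lemma trim {E : Type*} [AddCommGroup E] [Module ℂ E] (f : ℂ → E) (w : ℕ → E) (x0 : ℂ)
    (hx0 : f x0 ≠ 0) (N : ℕ) (h : ∀ x, f x = ∑ k ∈ Finset.range N, x ^ k • w k) :
    ∃ d, w d ≠ 0 ∧ ∀ x, f x = ∑ k ∈ Finset.range (d + 1), x ^ k • w k := by
  induction N with
  | zero => exact absurd (by simpa using h x0) hx0
  | succ N ih =>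
    by_cases hw : w N = 0
    · apply ih
      intro x
      rw [h x, Finset.sum_range_succ, hw]; simp
    · exact ⟨N, hw, h⟩

lemma vec_poly (F : ℂ → V4) (S : Set ℂ)
    (h : ∀ i, ∃ P : Polynomial ℂ, ∀ s ∈ S, F s i = P.eval s) :
    ∃ (N : ℕ) (w : ℕ → V4), ∀ s ∈ S, F s = ∑ k ∈ Finset.range N, s ^ k • w k := by
  choose P hP using h
  refine ⟨Finset.univ.sup (fun i => (P i).natDegree) + 1, fun k i => (P i).coeff k, ?_⟩
  intro s hs
  ext i
  rw [hP i s hs, Polynomial.eval_eq_sum_range' (n := Finset.univ.sup (fun i => (P i).natDegree) + 1)]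
  · simp [Finset.sum_apply, mul_comm]
  · exact Nat.lt_succ_of_le (Finset.le_sup (f := fun i => (P i).natDegree) (Finset.mem_univ i))

lemma curve_poly (ρ : SL →* (V4 ≃ₗ[ℂ] V4)) (hρ : IsPolynomialRep ρ) (γ : ℂ → SL)
    (Q : Fin 2 × Fin 2 → Polynomial ℂ) (hQ : ∀ s ij, γ s ij.1 ij.2 = (Q ij).eval s) (v : V4) :
    ∃ (N : ℕ) (w : ℕ → V4), ∀ s, ρ (γ s) v = ∑ k ∈ Finset.range N, s ^ k • w k := by
  have := vec_poly (fun s => ρ (γ s) v) Set.univ (by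
    intro i
    obtain ⟨p, hp⟩ := hρ (LinearMap.proj i) v
    refine ⟨MvPolynomial.aeval Q p, ?_⟩
    intro s _
    have h1 := hp (γ s)
    simp only [LinearMap.proj_apply] at h1
    rw [h1]
    clear h1 hp
    induction p using MvPolynomial.induction_on with
    | C a => simp
    | add p q hp hq => simp only [map_add, Polynomial.eval_add, hp, hq]
    | mul_X p ij hp =>
      rw [map_mul, map_mul, Polynomial.eval_mul, hp, MvPolynomial.eval_X, MvPolynomial.aeval_X, hQ])
  simpa using this

lemma laurent (p : MvPolynomial (Fin 2 × Fin 2) ℂ) :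
    ∃ (N : ℕ), ∀ M ≥ N, ∃ P : Polynomial ℂ, ∀ t (ht : t ≠ 0),
      t ^ M * MvPolynomial.eval (fun ij => (tor t ht : Matrix (Fin 2) (Fin 2) ℂ) ij.1 ij.2) p
        = P.eval t := by
  induction p using MvPolynomial.induction_on with
  | C a => exact ⟨0, fun M _ => ⟨Polynomial.X ^ M * Polynomial.C a, by intros; rw [MvPolynomial.eval_C, Polynomial.eval_mul, Polynomial.eval_pow, Polynomial.eval_C, Polynomial.eval_X]⟩⟩
  | add p q hp hq =>
    obtain ⟨N1, h1⟩ := hp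
    obtain ⟨N2, h2⟩ := hq
    refine ⟨max N1 N2, fun M hM => ?_⟩
    obtain ⟨P, hP⟩ := h1 M (le_trans (le_max_left _ _) hM)
    obtain ⟨Q, hQ⟩ := h2 M (le_trans (le_max_right _ _) hM)
    exact ⟨P + Q, fun t ht => by simp only [map_add, mul_add, Polynomial.eval_add, hP, hQ]⟩
  | mul_X p ij hp =>
    obtain ⟨N, h⟩ := hp
    refine ⟨N + 1, fun M hM => ?_⟩
    obtain ⟨P, hP⟩ := h (M - 1) (by omega)
    obtain ⟨M, rfl⟩ : ∃ M', M = M' + 1 := ⟨M - 1, by omega⟩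
    simp only [Nat.add_sub_cancel] at hP
    have key : ∀ R : Polynomial ℂ, (∀ t (ht : t ≠ 0), t * (tor t ht : Matrix (Fin 2) (Fin 2) ℂ) ij.1 ij.2 = R.eval t) →
      ∃ P : Polynomial ℂ, ∀ t (ht : t ≠ 0),
      t ^ (M + 1) * MvPolynomial.eval (fun ij => (tor t ht : Matrix (Fin 2) (Fin 2) ℂ) ij.1 ij.2) (p * MvPolynomial.X ij)
        = P.eval t := by
      intro R hR
      refine ⟨P * R, fun t ht => ?_⟩
      rw [Polynomial.eval_mul, ← hR t ht, ← hP t ht]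
      simp only [map_mul, MvPolynomial.eval_X]
      ring
    obtain ⟨i, j⟩ := ij
    fin_cases i <;> fin_cases j
    · exact key (Polynomial.X ^ 2) (by intro t ht; simp [tor]; ring)
    · exact key 0 (by intro t ht; simp [tor])
    · exact key 0 (by intro t ht; simp [tor])
    · exact key 1 (by intro t ht; simp [tor, ht])

lemma tor_poly (ρ : SL →* (V4 ≃ₗ[ℂ] V4)) (hρ : IsPolynomialRep ρ) (v : V4) :
    ∃ (M N : ℕ) (w : ℕ → V4), ∀ t (ht : t ≠ 0),
      t ^ M • ρ (tor t ht) v = ∑ k ∈ Finset.range N, t ^ k • w k := by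
  have h1 : ∀ i, ∃ p : MvPolynomial (Fin 2 × Fin 2) ℂ, ∀ g : SL, ρ g v i = 
      MvPolynomial.eval (fun ij => (g : Matrix (Fin 2) (Fin 2) ℂ) ij.1 ij.2) p := fun i =>
    hρ (LinearMap.proj i) v
  choose p hp using h1
  have h2 := fun i => laurent (p i)
  choose N hN using h2
  obtain ⟨N', w, hw⟩ := vec_poly (fun t => if ht : t ≠ 0 then t ^ (Finset.univ.sup N) • ρ (tor t ht) v else 0) {t | t ≠ 0} (by
    intro i
    obtain ⟨P, hP⟩ := hN i (Finset.univ.sup N) (Finset.le_sup (Finset.mem_univ i))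
    refine ⟨P, fun s hs => ?_⟩
    have hs' : s ≠ 0 := hs
    rw [← hP s hs']
    simp [hs', hp])
  refine ⟨Finset.univ.sup N, N', w, fun t ht => ?_⟩
  rw [← hw t ht]
  simp [ht]

lemma agree_zero {E : Type*} [TopologicalSpace E] [T2Space E] (f g : ℂ → E) (hf : Continuous f)
    (hg : Continuous g) (a : ℂ) (h : ∀ z, z ≠ a → f z = g z) : ∀ z, f z = g z := by
  have : f = g := Continuous.ext_on (dense_compl_singleton a) hf hg (fun z hz => h z hz)
  exact fun z => congrFun this z

lemma rho_mul (ρ : SL →* (V4 ≃ₗ[ℂ] V4)) (g h : SL) (v : V4) : ρ (g * h) v = ρ g (ρ h v) := by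
  rw [map_mul]; rfl

lemma exists_up_fixed (ρ : SL →* (V4 ≃ₗ[ℂ] V4)) (hρ : IsPolynomialRep ρ) :
    ∃ v : V4, v ≠ 0 ∧ ∀ s, ρ (up s) v = v := by
  let v : V4 := fun _ => 1
  have hv : v ≠ 0 := fun h => by simpa [v] using congrFun h 0
  obtain ⟨N, w, hw⟩ := curve_poly ρ hρ up
    (fun ij => if ij = (0,0) then 1 else if ij = (0,1) then Polynomial.X else if ij = (1,0) then 0 else 1)
    (by rintro s ⟨i, j⟩; fin_cases i <;> fin_cases j <;> simp) v
  obtain ⟨d, hd, hw⟩ := trim (fun s => ρ (up s) v) w 0 (by simpa using hv) N hw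
  refine ⟨w d, hd, fun t => ?_⟩
  have hmul : ∀ s, up t * up s = up (t + s) := by
    intro s
    apply SL_ext <;> simp [SL_mul]
    ring
  have key := agree_zero
    (fun z => ∑ k ∈ Finset.range (d + 1), z ^ (d - k) • ρ (up t) (w k))
    (fun z => ∑ k ∈ Finset.range (d + 1), (z ^ (d - k) * (1 + t * z) ^ k) • w k)
    (by fun_prop) (by fun_prop) 0 (by
      intro z hz
      have h1 : ρ (up t) (ρ (up z⁻¹) v) = ρ (up (t + z⁻¹)) v := by
        rw [← rho_mul, hmul]
      simp only [hw, map_sum, map_smul] at h1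
      have h2 := congrArg (fun v => z ^ d • v) h1
      simp only [Finset.smul_sum, smul_smul] at h2
      convert h2 using 1
      · apply Finset.sum_congr rfl
        intro k hk
        have : d = (d - k) + k := by have := Finset.mem_range.1 hk; omega
        congr 1
        conv_rhs => rw [this, pow_add]
        rw [mul_assoc, ← mul_pow, mul_inv_cancel₀ hz, one_pow, mul_one]
      · apply Finset.sum_congr rfl
        intro k hk
        have : d = (d - k) + k := by have := Finset.mem_range.1 hk; omega
        congr 1
        conv_rhs => rw [this, pow_add]
        rw [mul_assoc, ← mul_pow]
        congr 2
        field_simp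
        ring) 0
  simp only [Finset.sum_range_succ] at key
  have hz : ∀ k ∈ Finset.range d, (0 : ℂ) ^ (d - k) = 0 := by
    intro k hk
    apply zero_pow
    have := Finset.mem_range.1 hk; omega
  rw [Finset.sum_eq_zero, Finset.sum_eq_zero] at key
  · simpa using key
  · intro k hk; rw [hz k hk]; simp
  · intro k hk; rw [hz k hk]; simp

lemma exists_hw (ρ : SL →* (V4 ≃ₗ[ℂ] V4)) (hρ : IsPolynomialRep ρ) :
    ∃ (v : V4) (n : ℤ), v ≠ 0 ∧ (∀ s, ρ (up s) v = v) ∧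
      ∀ t (ht : t ≠ 0), ρ (tor t ht) v = t ^ n • v := by
  obtain ⟨v, hv, hup⟩ := exists_up_fixed ρ hρ
  obtain ⟨M, N, w, hw⟩ := tor_poly ρ hρ v
  have hex : ∃ k < N, w k ≠ 0 := by
    by_contra! hcon
    have := hw 1 one_ne_zero
    rw [Finset.sum_eq_zero (fun k hk => by rw [hcon k (Finset.mem_range.1 hk)]; simp)] at this
    have h1 : tor 1 one_ne_zero = 1 := by apply SL_ext <;> simp
    rw [h1] at this
    simp at this
    exact hv this
  obtain ⟨k, hk, hwk⟩ := hex
  refine ⟨w k, (k : ℤ) - M, hwk, ?_, ?_⟩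
  · intro s
    have := coeff_zero {y | y ≠ 0} (inf_ne 0) N (fun k => ρ (up s) (w k) - w k) (by
      intro t ht
      have ht' : t ≠ 0 := ht
      have hc : up s * tor t ht' = tor t ht' * up (s / t ^ 2) := by
        apply SL_ext <;> simp [SL_mul]
        field_simp
      have h1 : ρ (up s) (t ^ M • ρ (tor t ht) v) = t ^ M • ρ (tor t ht) v := by
        rw [map_smul, ← rho_mul, hc, rho_mul, hup]
      rw [hw] at h1
      simp only [smul_sub, Finset.sum_sub_distrib]
      rw [sub_eq_zero]
      simpa using h1) k hk
    exact sub_eq_zero.1 this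
  · intro s hs
    have := coeff_zero {y | y ≠ 0} (inf_ne 0) N (fun k => s ^ M • ρ (tor s hs) (w k) - s ^ k • w k) (by
      intro t ht
      have ht' : t ≠ 0 := ht
      have hc : tor s hs * tor t ht' = tor (s * t) (mul_ne_zero hs ht') := by
        apply SL_ext <;> simp [SL_mul]
        ring
      have h1 : s ^ M • ρ (tor s hs) (t ^ M • ρ (tor t ht) v) = (s * t) ^ M • ρ (tor (s * t) (mul_ne_zero hs ht')) v := by
        rw [map_smul, ← rho_mul, hc, smul_smul, mul_pow]
      rw [hw, hw] at h1
      simp only [smul_sub, Finset.sum_sub_distrib]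
      rw [sub_eq_zero]
      simp only [map_sum, map_smul, Finset.smul_sum] at h1
      convert h1 using 1
      · apply Finset.sum_congr rfl
        intro k _
        rw [smul_comm]
      · apply Finset.sum_congr rfl
        intro k _
        rw [smul_smul, mul_pow, mul_comm]) k hk
    rw [sub_eq_zero] at this
    rw [zpow_sub₀ hs, zpow_natCast, zpow_natCast, div_eq_inv_mul, mul_smul, ← this, smul_smul,
      inv_mul_cancel₀ (pow_ne_zero _ hs), one_smul]

lemma act_gen (ρ : SL →* (V4 ≃ₗ[ℂ] V4)) (v : V4) (n : ℤ) (hup : ∀ s, ρ (up s) v = v)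
    (htor : ∀ t (ht : t ≠ 0), ρ (tor t ht) v = t ^ n • v) (g : SL) (y : ℂ)
    (h : g 0 0 + g 0 1 * y ≠ 0) :
    ρ g (ρ (lo y) v) = (g 0 0 + g 0 1 * y) ^ n •
      ρ (lo ((g 1 0 + g 1 1 * y) / (g 0 0 + g 0 1 * y))) v := by
  have hg : g * lo y = lo ((g 1 0 + g 1 1 * y) / (g 0 0 + g 0 1 * y)) *
      (tor _ h * up (g 0 1 / (g 0 0 + g 0 1 * y))) := by
    have := SL_det g
    apply SL_ext <;> simp only [SL_mul, lo00, lo01, lo10, lo11, up00, up01, up10, up11, tor00,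
      tor01, tor10, tor11]
    all_goals
      generalize g 0 0 = a at *
      generalize g 0 1 = b at *
      generalize g 1 0 = c at *
      generalize g 1 1 = d at *
      generalize hD : a + b * y = D at *
    · linear_combination hD
    · field_simp; ring
    · field_simp; ring
    · field_simp
      linear_combination this - d * hD
  rw [← rho_mul, hg, rho_mul, rho_mul, hup, htor, map_smul]

/-- The structure of the representation. -/
lemma structure_thm (ρ : SL →* (V4 ≃ₗ[ℂ] V4)) (hρ : IsPolynomialRep ρ)
    (hirr : IsIrreducibleRep ρ) :
    ∃ b : Module.Basis (Fin 4) ℂ V4, ∀ (g : SL) (y : ℂ),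
      ρ g (b 0 + y • b 1 + y ^ 2 • b 2 + y ^ 3 • b 3) =
       (g 0 0 + g 0 1 * y) ^ 3 • b 0 +
       ((g 0 0 + g 0 1 * y) ^ 2 * (g 1 0 + g 1 1 * y)) • b 1 +
       ((g 0 0 + g 0 1 * y) * (g 1 0 + g 1 1 * y) ^ 2) • b 2 +
       (g 1 0 + g 1 1 * y) ^ 3 • b 3 := by
  obtain ⟨v, n, hv, hup, htor⟩ := exists_hw ρ hρ
  obtain ⟨N, w, hw⟩ := curve_poly ρ hρ lo
    (fun ij => if ij = (0,0) then 1 else if ij = (0,1) then 0 else if ij = (1,0) then Polynomial.X else 1)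
    (by rintro s ⟨i, j⟩; fin_cases i <;> fin_cases j <;> simp) v
  have hlo0 : lo 0 = 1 := by apply SL_ext <;> simp
  obtain ⟨d, hd, hw⟩ := trim (fun s => ρ (lo s) v) w 0 (by simpa [hlo0] using hv) N hw
  replace hw : ∀ x, ρ (lo x) v = ∑ k ∈ Finset.range (d + 1), x ^ k • w k := hw
  have hw0 : w 0 = v := by
    have := hw 0
    rw [hlo0, Finset.sum_range_succ'] at this
    simpa using this.symm
  have act := act_gen ρ v n hup htor
  -- n = d
  have hnd : n = d := by
    have hA : ∀ y : ℂ, y ≠ 0 → ∑ k ∈ Finset.range (d + 1), y ^ k • ρ wl (w k) =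
        ∑ k ∈ Finset.range (d + 1), (-y) ^ (n - k) • w k := by
      intro y hy
      have h1 := act wl y (by simpa using hy)
      rw [hw, hw] at h1
      simp only [map_sum, map_smul, Finset.smul_sum] at h1
      rw [h1]
      apply Finset.sum_congr rfl
      intro k _
      rw [smul_smul]
      congr 1
      rw [zpow_sub₀ (neg_ne_zero.2 hy)]
      simp [div_eq_mul_inv]
      left
      rw [← inv_neg, inv_pow]
    rcases lt_trichotomy n d with h | h | h
    · exfalso
      obtain ⟨m, hm⟩ : ∃ m : ℕ, (d : ℤ) = n + m + 1 := ⟨(d - n - 1).toNat, by omega⟩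
      have key := agree_zero
        (fun z => ∑ k ∈ Finset.range (d + 1), ((-z) ^ (m + 1) * z ^ k) • ρ wl (w k))
        (fun z => ∑ k ∈ Finset.range (d + 1), (-z) ^ (d - k) • w k)
        (by fun_prop) (by fun_prop) 0 (by
          intro z hz
          simp only [mul_smul, ← Finset.smul_sum]
          rw [hA z hz, Finset.smul_sum]
          apply Finset.sum_congr rfl
          intro k hk
          rw [smul_smul]
          congr 1
          have := Finset.mem_range.1 hk
          rw [← zpow_natCast, ← zpow_natCast, ← zpow_add₀ (neg_ne_zero.2 hz)]
          congr 1
          push_cast [Nat.le_of_lt_succ this]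
          omega) 0
      simp only [Finset.sum_range_succ _ d] at key
      rw [Finset.sum_eq_zero, Finset.sum_eq_zero] at key
      · simp at key
        exact hd key.symm
      · intro k hk
        rw [neg_zero, zero_pow, zero_smul]
        have := Finset.mem_range.1 hk; omega
      · intro k hk; simp
    · exact h
    · exfalso
      obtain ⟨m, hm⟩ : ∃ m : ℕ, n = d + m + 1 := ⟨(n - d - 1).toNat, by omega⟩
      have key := agree_zero
        (fun z => ∑ k ∈ Finset.range (d + 1), (z ^ k) • ρ wl (w k))
        (fun z => ∑ k ∈ Finset.range (d + 1), (-z) ^ (d + m + 1 - k) • w k)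
        (by fun_prop) (by fun_prop) 0 (by
          intro z hz
          rw [hA z hz]
          apply Finset.sum_congr rfl
          intro k hk
          congr 1
          have := Finset.mem_range.1 hk
          rw [← zpow_natCast]
          congr 1
          omega) 0
      rw [Finset.sum_range_succ', Finset.sum_eq_zero, Finset.sum_eq_zero] at key
      · simp [hw0] at key
        exact hv key
      · intro k hk
        rw [neg_zero, zero_pow, zero_smul]
        have := Finset.mem_range.1 hk; omega
      · intro k hk; simp
  subst hnd
  -- nonvanishing
  have hne : ∀ k ≤ d, w k ≠ 0 := by
    intro k hk hk0
    have hT : ∀ x : ℂ, ρ (lo x) (w k) = ∑ j ∈ Finset.range (d + 1), ((j.choose k : ℂ) * x ^ (j - k)) • w j := by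
      intro x
      have := coeff_zero {y | y ≠ 0} (inf_ne 0) (d + 1)
        (fun k => ρ (lo x) (w k) - ∑ j ∈ Finset.range (d + 1), ((j.choose k : ℂ) * x ^ (j - k)) • w j) (by
        intro y _
        have hc : lo x * lo y = lo (y + x) := by
          apply SL_ext <;> simp [SL_mul]
          ring
        have h1 : ρ (lo x) (ρ (lo y) v) = ρ (lo (y + x)) v := by rw [← rho_mul, hc]
        rw [hw, hw] at h1
        simp only [map_sum, map_smul] at h1
        simp only [smul_sub, Finset.sum_sub_distrib]
        rw [sub_eq_zero, h1]
        simp only [Finset.smul_sum]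
        rw [Finset.sum_comm]
        apply Finset.sum_congr rfl
        intro j hj
        simp only [smul_smul, ← Finset.sum_smul]
        congr 1
        rw [add_pow]
        have hj' := Finset.mem_range.1 hj
        rw [← Finset.sum_subset (Finset.range_subset_range.2 (show j + 1 ≤ d + 1 by omega))]
        · apply Finset.sum_congr rfl
          intro i _
          ring
        · intro i _ hi
          rw [Nat.choose_eq_zero_of_lt (by simpa using hi)]
          simp) k (by omega)
      exact sub_eq_zero.1 this
    have := coeff_zero {y | y ≠ 0} (inf_ne 0) (d + 1)
      (fun j => (j.choose k : ℂ) • w j) (by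
        intro x hx
        have h1 := hT x
        rw [hk0, map_zero] at h1
        have h2 := congrArg (fun v => x ^ k • v) h1
        simp only [smul_zero, Finset.smul_sum] at h2
        rw [h2]
        apply Finset.sum_congr rfl
        intro j _
        rw [smul_smul, smul_smul]
        congr 1
        by_cases hjk : k ≤ j
        · conv_lhs => rw [show j = (j - k) + k by omega]
          rw [pow_add, show j - k + k = j by omega]; ring
        · rw [Nat.choose_eq_zero_of_lt (by omega)]; simp) d (by omega)
    rcases smul_eq_zero.1 this with h | h
    · have : d.choose k = 0 := by exact_mod_cast h
      exact absurd this (Nat.choose_pos hk).ne'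
    · exact hd h
  -- weights
  have hwt : ∀ k < d + 1, ρ (tor 2 two_ne_zero) (w k) = (2 : ℂ) ^ ((d : ℤ) - 2 * k) • w k := by
    intro k hk
    have := coeff_zero {y | y ≠ 0} (inf_ne 0) (d + 1)
      (fun k => ρ (tor 2 two_ne_zero) (w k) - (2 : ℂ) ^ ((d : ℤ) - 2 * k) • w k) (by
      intro y _
      have h1 := act (tor 2 two_ne_zero) y (by simp)
      rw [hw, hw] at h1
      simp only [map_sum, map_smul, Finset.smul_sum] at h1
      simp only [smul_sub, Finset.sum_sub_distrib]
      rw [sub_eq_zero, h1]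
      apply Finset.sum_congr rfl
      intro j _
      rw [smul_smul, smul_smul]
      congr 1
      have e : (0 + (2:ℂ)⁻¹ * y) / (2 + 0 * y) = y * 4⁻¹ := by ring
      simp only [tor00, tor01, tor10, tor11]
      rw [e, zpow_sub₀ two_ne_zero, zpow_mul, mul_pow, inv_pow]
      norm_num
      ring
      ) k hk
    exact sub_eq_zero.1 this
  have hli : LinearIndependent ℂ (fun k : Fin (d + 1) => w k) := by
    apply Module.End.eigenvectors_linearIndependent' (ρ (tor 2 two_ne_zero) : V4 →ₗ[ℂ] V4)
      (fun k : Fin (d + 1) => (2 : ℂ) ^ ((d : ℤ) - 2 * (k : ℕ)))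
    · intro i j hij
      have h2 : ((2 : ℝ) : ℂ) ^ ((d : ℤ) - 2 * (i : ℕ)) = ((2 : ℝ) : ℂ) ^ ((d : ℤ) - 2 * (j : ℕ)) := by
        simpa using hij
      have h3 : (2 : ℝ) ^ ((d : ℤ) - 2 * (i : ℕ)) = (2 : ℝ) ^ ((d : ℤ) - 2 * (j : ℕ)) := by
        exact_mod_cast h2
      have h4 := zpow_right_injective₀ (by norm_num : (0 : ℝ) < 2) (by norm_num) h3
      ext
      omega
    · intro k
      refine ⟨Module.End.mem_eigenspace_iff.2 (hwt k k.2), hne k (by omega)⟩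
  have hspan : Submodule.span ℂ (Set.range (fun k : Fin (d + 1) => w k)) = ⊤ := by
    set W := Submodule.span ℂ (Set.range (fun k : Fin (d + 1) => w k)) with hW
    have hmem : ∀ k < d + 1, w k ∈ W := fun k hk => Submodule.subset_span ⟨⟨k, hk⟩, rfl⟩
    have hmemp : ∀ y, ρ (lo y) v ∈ W := by
      intro y
      rw [hw]
      exact Submodule.sum_mem _ fun k hk => W.smul_mem _ (hmem k (Finset.mem_range.1 hk))
    rcases hirr W (by
      intro g x hx
      have hg : ∀ k < d + 1, ρ g (w k) ∈ W := by
        apply coeff_mem W {y | g 0 0 + g 0 1 * y ≠ 0}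
        · by_cases hb : g 0 1 = 0
          · have ha : g 0 0 ≠ 0 := by
              intro ha
              have := SL_det g
              simp [ha, hb] at this
            simp [hb, ha, Set.infinite_univ]
          · refine (inf_ne (- g 0 0 / g 0 1)).mono ?_
            intro y hy h0
            apply hy
            field_simp
            linear_combination h0
        · intro y hy
          have h1 := act g y hy
          rw [hw y] at h1
          simp only [map_sum, map_smul] at h1
          rw [h1]
          exact W.smul_mem _ (hmemp _)
      have : W ≤ W.comap (ρ g : V4 →ₗ[ℂ] V4) := by
        rw [hW, Submodule.span_le]
        rintro _ ⟨k, rfl⟩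
        exact hg k k.2
      exact this hx) with h | h
    · exfalso
      have := hmem 0 (by omega)
      rw [h, Submodule.mem_bot] at this
      exact hne 0 (by omega) this
    · exact h
  let B := Module.Basis.mk hli hspan.ge
  have hd3 : d = 3 := by
    have := Module.finrank_eq_card_basis B
    simp at this
    omega
  subst hd3
  refine ⟨B, fun g y => ?_⟩
  have hB : ∀ i : Fin 4, B i = w i := fun i => Module.Basis.mk_apply _ _ _
  have hgen : ∀ y, g 0 0 + g 0 1 * y ≠ 0 → ρ g (w 0 + y • w 1 + y ^ 2 • w 2 + y ^ 3 • w 3) =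
       (g 0 0 + g 0 1 * y) ^ 3 • w 0 +
       ((g 0 0 + g 0 1 * y) ^ 2 * (g 1 0 + g 1 1 * y)) • w 1 +
       ((g 0 0 + g 0 1 * y) * (g 1 0 + g 1 1 * y) ^ 2) • w 2 +
       (g 1 0 + g 1 1 * y) ^ 3 • w 3 := by
    intro y hy
    have h1 := act g y hy
    rw [hw, hw] at h1
    simp only [Finset.sum_range_succ, Finset.sum_range_zero, zero_add, pow_zero, one_smul, pow_one, smul_add, smul_smul] at h1
    rw [h1]
    have e : ((3 : ℕ) : ℤ) = 3 := rfl
    congr 1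
    · congr 1
      · congr 1
        congr 1
        rw [zpow_natCast]; field_simp
      · congr 1
        rw [zpow_natCast]; field_simp
    · congr 1
      rw [zpow_natCast]; field_simp
  simp only [hB]
  show ρ g (w 0 + y • w 1 + y ^ 2 • w 2 + y ^ 3 • w 3) =
       (g 0 0 + g 0 1 * y) ^ 3 • w 0 +
       ((g 0 0 + g 0 1 * y) ^ 2 * (g 1 0 + g 1 1 * y)) • w 1 +
       ((g 0 0 + g 0 1 * y) * (g 1 0 + g 1 1 * y) ^ 2) • w 2 +
       (g 1 0 + g 1 1 * y) ^ 3 • w 3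
  by_cases hb : g 0 1 = 0
  · have ha : g 0 0 ≠ 0 := by
      intro ha
      have := SL_det g
      simp [ha, hb] at this
    exact hgen y (by simpa [hb] using ha)
  · have hc : Continuous (ρ g) := LinearMap.continuous_of_finiteDimensional (ρ g : V4 →ₗ[ℂ] V4)
    refine agree_zero _ _ ?_ ?_ (- g 0 0 / g 0 1) (fun y hy => hgen y ?_) y
    · fun_prop
    · fun_prop
    · intro h0
      apply hy
      field_simp
      linear_combination h0

def HasAct (ρ : SL →* (V4 ≃ₗ[ℂ] V4)) (B : Module.Basis (Fin 4) ℂ V4) : Prop :=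
  ∀ (g : SL) (y : ℂ),
      ρ g (B 0 + y • B 1 + y ^ 2 • B 2 + y ^ 3 • B 3) =
       (g 0 0 + g 0 1 * y) ^ 3 • B 0 +
       ((g 0 0 + g 0 1 * y) ^ 2 * (g 1 0 + g 1 1 * y)) • B 1 +
       ((g 0 0 + g 0 1 * y) * (g 1 0 + g 1 1 * y) ^ 2) • B 2 +
       (g 1 0 + g 1 1 * y) ^ 3 • B 3

/-- The vector with given coordinates. -/
def pt (B : Module.Basis (Fin 4) ℂ V4) (x0 x1 x2 x3 : ℂ) : V4 :=
  x0 • B 0 + x1 • B 1 + x2 • B 2 + x3 • B 3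

lemma pt_coord (B : Module.Basis (Fin 4) ℂ V4) (v : V4) :
    v = pt B (B.coord 0 v) (B.coord 1 v) (B.coord 2 v) (B.coord 3 v) := by
  have := B.sum_repr v
  rw [Fin.sum_univ_four] at this
  exact this.symm

lemma coord0 (B : Module.Basis (Fin 4) ℂ V4) (x0 x1 x2 x3 : ℂ) :
    B.coord 0 (pt B x0 x1 x2 x3) = x0 := by simp [pt]
lemma coord1 (B : Module.Basis (Fin 4) ℂ V4) (x0 x1 x2 x3 : ℂ) :
    B.coord 1 (pt B x0 x1 x2 x3) = x1 := by simp [pt]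
lemma coord2 (B : Module.Basis (Fin 4) ℂ V4) (x0 x1 x2 x3 : ℂ) :
    B.coord 2 (pt B x0 x1 x2 x3) = x2 := by simp [pt]
lemma coord3 (B : Module.Basis (Fin 4) ℂ V4) (x0 x1 x2 x3 : ℂ) :
    B.coord 3 (pt B x0 x1 x2 x3) = x3 := by simp [pt]

lemma pt_inj {B : Module.Basis (Fin 4) ℂ V4} {x0 x1 x2 x3 y0 y1 y2 y3 : ℂ}
    (h : pt B x0 x1 x2 x3 = pt B y0 y1 y2 y3) : x0 = y0 ∧ x1 = y1 ∧ x2 = y2 ∧ x3 = y3 := by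
  refine ⟨?_, ?_, ?_, ?_⟩
  · rw [← coord0 B x0 x1 x2 x3, h, coord0]
  · rw [← coord1 B x0 x1 x2 x3, h, coord1]
  · rw [← coord2 B x0 x1 x2 x3, h, coord2]
  · rw [← coord3 B x0 x1 x2 x3, h, coord3]

lemma act_pt {ρ : SL →* (V4 ≃ₗ[ℂ] V4)} {B : Module.Basis (Fin 4) ℂ V4} (hB : HasAct ρ B)
    (g : SL) (x0 x1 x2 x3 : ℂ) :
    ρ g (pt B x0 x1 x2 x3) = pt B
      (g 0 0 ^ 3 * x0 + 3 * g 0 0 ^ 2 * g 0 1 * x1 + 3 * g 0 0 * g 0 1 ^ 2 * x2 + g 0 1 ^ 3 * x3)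
      (g 0 0 ^ 2 * g 1 0 * x0 + (g 0 0 ^ 2 * g 1 1 + 2 * g 0 0 * g 0 1 * g 1 0) * x1
        + (g 0 1 ^ 2 * g 1 0 + 2 * g 0 0 * g 0 1 * g 1 1) * x2 + g 0 1 ^ 2 * g 1 1 * x3)
      (g 0 0 * g 1 0 ^ 2 * x0 + (g 0 1 * g 1 0 ^ 2 + 2 * g 0 0 * g 1 0 * g 1 1) * x1
        + (g 0 0 * g 1 1 ^ 2 + 2 * g 0 1 * g 1 0 * g 1 1) * x2 + g 0 1 * g 1 1 ^ 2 * x3)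
      (g 1 0 ^ 3 * x0 + 3 * g 1 0 ^ 2 * g 1 1 * x1 + 3 * g 1 0 * g 1 1 ^ 2 * x2
        + g 1 1 ^ 3 * x3) := by
  have hg := hB g
  generalize ρ g = R at *
  generalize g 0 0 = a at *
  generalize g 0 1 = b at *
  generalize g 1 0 = c at *
  generalize g 1 1 = d at *
  let W : ℕ → V4 := fun k => match k with
    | 0 => R (B 0) - pt B (a ^ 3) (a ^ 2 * c) (a * c ^ 2) (c ^ 3)
    | 1 => R (B 1) - pt B (3 * a ^ 2 * b) (a ^ 2 * d + 2 * a * b * c) (b * c ^ 2 + 2 * a * c * d) (3 * c ^ 2 * d)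
    | 2 => R (B 2) - pt B (3 * a * b ^ 2) (b ^ 2 * c + 2 * a * b * d) (a * d ^ 2 + 2 * b * c * d) (3 * c * d ^ 2)
    | _ => R (B 3) - pt B (b ^ 3) (b ^ 2 * d) (b * d ^ 2) (d ^ 3)
  have key := coeff_zero Set.univ Set.infinite_univ 4 W (by
    intro y _
    have h1 := hg y
    simp only [map_add, map_smul] at h1
    simp only [Finset.sum_range_succ, Finset.sum_range_zero, W, pt]
    rw [← sub_eq_zero] at h1
    refine Eq.trans ?_ h1
    module)
  have k0 := sub_eq_zero.1 (key 0 (by norm_num))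
  have k1 := sub_eq_zero.1 (key 1 (by norm_num))
  have k2 := sub_eq_zero.1 (key 2 (by norm_num))
  have k3 := sub_eq_zero.1 (key 3 (by norm_num))
  conv_lhs => unfold pt
  simp only [map_add, map_smul, k0, k1, k2, k3]
  unfold pt
  module

lemma pt_add (B : Module.Basis (Fin 4) ℂ V4) (x0 x1 x2 x3 y0 y1 y2 y3 : ℂ) :
    pt B x0 x1 x2 x3 + pt B y0 y1 y2 y3 = pt B (x0 + y0) (x1 + y1) (x2 + y2) (x3 + y3) := by
  unfold pt; module
lemma pt_sub (B : Module.Basis (Fin 4) ℂ V4) (x0 x1 x2 x3 y0 y1 y2 y3 : ℂ) :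
    pt B x0 x1 x2 x3 - pt B y0 y1 y2 y3 = pt B (x0 - y0) (x1 - y1) (x2 - y2) (x3 - y3) := by
  unfold pt; module
lemma pt_smul (B : Module.Basis (Fin 4) ℂ V4) (c x0 x1 x2 x3 : ℂ) :
    c • pt B x0 x1 x2 x3 = pt B (c * x0) (c * x1) (c * x2) (c * x3) := by
  unfold pt; module

def cone (B : Module.Basis (Fin 4) ℂ V4) (x y : ℂ) : V4 :=
  pt B (x ^ 3) (x ^ 2 * y) (x * y ^ 2) (y ^ 3)

lemma act_cone {ρ : SL →* (V4 ≃ₗ[ℂ] V4)} {B : Module.Basis (Fin 4) ℂ V4} (hB : HasAct ρ B)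
    (g : SL) (x y : ℂ) :
    ρ g (cone B x y) = cone B (g 0 0 * x + g 0 1 * y) (g 1 0 * x + g 1 1 * y) := by
  rw [cone, act_pt hB, cone]
  congr 1 <;> ring

def disc (a b c d : ℂ) : ℂ :=
  a ^ 2 * d ^ 2 - 6 * a * b * c * d + 4 * a * c ^ 3 + 4 * b ^ 3 * d - 3 * b ^ 2 * c ^ 2

def Disc (B : Module.Basis (Fin 4) ℂ V4) (v : V4) : ℂ :=
  disc (B.coord 0 v) (B.coord 1 v) (B.coord 2 v) (B.coord 3 v)

def Hes (B : Module.Basis (Fin 4) ℂ V4) (v : V4) : ℂ :=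
  B.coord 0 v * B.coord 2 v - B.coord 1 v ^ 2

lemma Disc_pt (B : Module.Basis (Fin 4) ℂ V4) (x0 x1 x2 x3 : ℂ) :
    Disc B (pt B x0 x1 x2 x3) = disc x0 x1 x2 x3 := by
  simp only [Disc, coord0, coord1, coord2, coord3]

lemma disc_inv (a b c d x0 x1 x2 x3 : ℂ) :
    disc (a ^ 3 * x0 + 3 * a ^ 2 * b * x1 + 3 * a * b ^ 2 * x2 + b ^ 3 * x3)
      (a ^ 2 * c * x0 + (a ^ 2 * d + 2 * a * b * c) * x1
        + (b ^ 2 * c + 2 * a * b * d) * x2 + b ^ 2 * d * x3)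
      (a * c ^ 2 * x0 + (b * c ^ 2 + 2 * a * c * d) * x1
        + (a * d ^ 2 + 2 * b * c * d) * x2 + b * d ^ 2 * x3)
      (c ^ 3 * x0 + 3 * c ^ 2 * d * x1 + 3 * c * d ^ 2 * x2 + d ^ 3 * x3)
    = (a * d - b * c) ^ 6 * disc x0 x1 x2 x3 := by
  unfold disc
  ring

lemma Disc_inv {ρ : SL →* (V4 ≃ₗ[ℂ] V4)} {B : Module.Basis (Fin 4) ℂ V4} (hB : HasAct ρ B)
    (g : SL) (v : V4) : Disc B (ρ g v) = Disc B v := by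
  rw [pt_coord B v, act_pt hB, Disc_pt, Disc_pt, disc_inv, SL_det, one_pow, one_mul]

lemma poly_coord (B : Module.Basis (Fin 4) ℂ V4) (i : Fin 4) :
    (fun v => B.coord i v) ∈ Algebra.adjoin ℂ (Set.range fun l : V4 →ₗ[ℂ] ℂ => (l : V4 → ℂ)) :=
  Algebra.subset_adjoin ⟨B.coord i, rfl⟩

lemma poly_const (c : ℂ) :
    (fun _ => c) ∈ Algebra.adjoin ℂ (Set.range fun l : V4 →ₗ[ℂ] ℂ => (l : V4 → ℂ)) :=
  Subalgebra.algebraMap_mem _ c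

lemma Disc_poly (B : Module.Basis (Fin 4) ℂ V4) : IsPolyFun (Disc B) := by
  have h0 := poly_coord B 0
  have h1 := poly_coord B 1
  have h2 := poly_coord B 2
  have h3 := poly_coord B 3
  unfold IsPolyFun
  have c6 := poly_const 6
  have c4 := poly_const 4
  have c3 := poly_const 3
  generalize Algebra.adjoin ℂ (Set.range fun l : V4 →ₗ[ℂ] ℂ => (l : V4 → ℂ)) = A at *
  exact A.sub_mem (A.add_mem (A.add_mem (A.sub_mem (A.mul_mem (A.pow_mem h0 2) (A.pow_mem h3 2))
    (A.mul_mem (A.mul_mem (A.mul_mem (A.mul_mem c6 h0) h1) h2) h3))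
    (A.mul_mem (A.mul_mem c4 h0) (A.pow_mem h2 3)))
    (A.mul_mem (A.mul_mem c4 (A.pow_mem h1 3)) h3))
    (A.mul_mem (A.mul_mem c3 (A.pow_mem h1 2)) (A.pow_mem h2 2))

lemma Hes_poly (B : Module.Basis (Fin 4) ℂ V4) : IsPolyFun (Hes B) := by
  have h0 := poly_coord B 0
  have h1 := poly_coord B 1
  have h2 := poly_coord B 2
  unfold IsPolyFun
  generalize Algebra.adjoin ℂ (Set.range fun l : V4 →ₗ[ℂ] ℂ => (l : V4 → ℂ)) = A at *
  exact A.sub_mem (A.mul_mem h0 h2) (A.pow_mem h1 2)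

lemma exists_mv (f : V4 → ℂ) (hf : IsPolyFun f) :
    ∃ P : MvPolynomial (Fin 4) ℂ, ∀ v, f v = MvPolynomial.eval v P := by
  unfold IsPolyFun at hf
  induction hf using Algebra.adjoin_induction with
  | mem x hx =>
    obtain ⟨l, rfl⟩ := hx
    refine ⟨∑ i, MvPolynomial.C (l (fun j => if i = j then 1 else 0)) * MvPolynomial.X i, fun v => ?_⟩
    simp only [map_sum, map_mul, MvPolynomial.eval_C, MvPolynomial.eval_X]
    conv_lhs => rw [LinearMap.pi_apply_eq_sum_univ l v]
    simp only [smul_eq_mul, mul_comm]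
  | algebraMap r => exact ⟨MvPolynomial.C r, fun v => by simp⟩
  | add x y _ _ hx hy =>
    obtain ⟨P, hP⟩ := hx
    obtain ⟨Q, hQ⟩ := hy
    exact ⟨P + Q, fun v => by simp [hP, hQ]⟩
  | mul x y _ _ hx hy =>
    obtain ⟨P, hP⟩ := hx
    obtain ⟨Q, hQ⟩ := hy
    exact ⟨P * Q, fun v => by simp [hP, hQ]⟩

lemma poly_smul (f : V4 → ℂ) (hf : IsPolyFun f) (c : ℂ) : IsPolyFun (fun v => f (c • v)) := by
  unfold IsPolyFun at hf
  induction hf using Algebra.adjoin_induction with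
  | mem x hx =>
    obtain ⟨l, rfl⟩ := hx
    exact Algebra.subset_adjoin ⟨c • l, by ext v; simp⟩
  | algebraMap r => exact Subalgebra.algebraMap_mem _ r
  | add x y _ _ hx hy => exact Subalgebra.add_mem _ hx hy
  | mul x y _ _ hx hy => exact Subalgebra.mul_mem _ hx hy

lemma poly_cancel (f q : V4 → ℂ) (hf : IsPolyFun f) (hq : IsPolyFun q) (v0 : V4) (h0 : q v0 ≠ 0)
    (h : ∀ v, q v ≠ 0 → f v = 0) : ∀ v, f v = 0 := by
  obtain ⟨P, hP⟩ := exists_mv f hf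
  obtain ⟨Q, hQ⟩ := exists_mv q hq
  have : P * Q = 0 := by
    apply MvPolynomial.funext
    intro v
    rw [map_mul, ← hP, ← hQ, map_zero]
    by_cases hv : q v = 0
    · rw [hv, mul_zero]
    · rw [h v hv, zero_mul]
  rcases mul_eq_zero.1 this with h1 | h1
  · intro v; rw [hP, h1, map_zero]
  · exact absurd (by rw [hQ, h1, map_zero]) h0

lemma cube_root (z : ℂ) : ∃ x : ℂ, x ^ 3 = z := IsAlgClosed.exists_pow_nat_eq z (by norm_num)
lemma sq_root (z : ℂ) : ∃ x : ℂ, x ^ 2 = z := IsAlgClosed.exists_pow_nat_eq z (by norm_num)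

/-- A generic cubic `v` has `i v` in its orbit. -/
lemma generic_orbit {ρ : SL →* (V4 ≃ₗ[ℂ] V4)} {B : Module.Basis (Fin 4) ℂ V4} (hB : HasAct ρ B)
    (v : V4) (h1 : Disc B v ≠ 0) (h2 : Hes B v ≠ 0) : ∃ g : SL, ρ g v = Complex.I • v := by
  rw [pt_coord B v] at h1 ⊢
  rw [Disc_pt] at h1
  unfold Hes at h2
  generalize B.coord 0 v = a at *
  generalize B.coord 1 v = b at *
  generalize B.coord 2 v = c at *
  generalize B.coord 3 v = d at *
  set H := a * c - b ^ 2 with hH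
  obtain ⟨s, hs⟩ := sq_root (disc a b c d)
  have hs0 : s ≠ 0 := by rintro rfl; apply h1; rw [← hs]; norm_num
  have hs' : s ^ 2 = (a * d - b * c) ^ 2 - 4 * H * (b * d - c ^ 2) := by
    rw [hs, disc, hH]; ring
  -- roots
  obtain ⟨l, hl⟩ : ∃ l, l = ((a * d - b * c) - s) / (2 * H) := ⟨_, rfl⟩
  obtain ⟨m, hm⟩ : ∃ m, m = ((a * d - b * c) + s) / (2 * H) := ⟨_, rfl⟩
  have hml : (m - l) * H = s := by rw [hl, hm]; field_simp; ring
  have hml0 : m - l ≠ 0 := by rintro h; rw [h, zero_mul] at hml; exact hs0 hml.symm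
  have hsum : (l + m) * H = a * d - b * c := by rw [hl, hm]; field_simp; ring
  have hprod : l * m * H = b * d - c ^ 2 := by
    have : l * m * H * (4 * H) = (b * d - c ^ 2) * (4 * H) := by
      rw [hl, hm]; field_simp; linear_combination -hs'
    exact mul_right_cancel₀ (mul_ne_zero (by norm_num) h2) this
  have hc : c = (l + m) * b - l * m * a := by
    apply mul_right_cancel₀ h2
    linear_combination (-b) * hsum + a * hprod + c * hH
  have hd : d = (l + m) * c - l * m * b := by
    apply mul_right_cancel₀ h2
    linear_combination (-c) * hsum + b * hprod + d * hH
  obtain ⟨A, hA⟩ : ∃ A, A = (m * a - b) / (m - l) := ⟨_, rfl⟩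
  obtain ⟨C, hC⟩ : ∃ C, C = (b - l * a) / (m - l) := ⟨_, rfl⟩
  have ea : a = A + C := by rw [hA, hC]; field_simp; ring
  have eb : b = A * l + C * m := by rw [hA, hC]; field_simp; ring
  have ec : c = A * l ^ 2 + C * m ^ 2 := by rw [hc, ea, eb]; ring
  have ed : d = A * l ^ 3 + C * m ^ 3 := by rw [hd, ec, eb]; ring
  have hHAC : H = A * C * (m - l) ^ 2 := by rw [hH, ea, eb, ec]; ring
  have hA0 : A ≠ 0 := by rintro h; apply h2; rw [hHAC, h]; ring
  have hC0 : C ≠ 0 := by rintro h; apply h2; rw [hHAC, h]; ring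
  clear hA hC hl hm hc hd hs hs' hsum hprod hml hHAC
  clear_value H
  clear hH h1
  subst ea eb ec ed
  have hI := Complex.I_sq
  obtain ⟨k, hk⟩ : ∃ k, k = m - l := ⟨_, rfl⟩
  have hkm : m = l + k := by rw [hk]; ring
  rw [← hk] at hml0
  -- the element exchanging the two lines
  obtain ⟨z, hz⟩ := cube_root (Complex.I * A / C)
  have hz0 : z ≠ 0 := by
    rintro rfl
    have : Complex.I * A / C ≠ 0 := div_ne_zero (mul_ne_zero Complex.I_ne_zero hA0) hC0
    apply this; rw [← hz]; norm_num
  have hz1 : z ^ 3 * C = Complex.I * A := by rw [hz]; field_simp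
  have hz2 : z⁻¹ ^ 3 * A = - Complex.I * C := by
    rw [inv_pow]
    field_simp
    linear_combination Complex.I * hz1 + A * hI
  -- g (1,l) = -z⁻¹ (1,m),  g (1,m) = z (1,l)
  have hdet : (!![(-z⁻¹ * m - z * l) / k, (z + z⁻¹) / k;
      (-z⁻¹ * m ^ 2 - z * l ^ 2) / k, (z * l + z⁻¹ * m) / k] : Matrix (Fin 2) (Fin 2) ℂ).det = 1 := by
    rw [Matrix.det_fin_two_of, hkm]
    field_simp
    ring
  obtain ⟨g, g00, g01, g10, g11⟩ : ∃ g : SL, g 0 0 = (-z⁻¹ * m - z * l) / k ∧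
      g 0 1 = (z + z⁻¹) / k ∧ g 1 0 = (-z⁻¹ * m ^ 2 - z * l ^ 2) / k ∧
      g 1 1 = (z * l + z⁻¹ * m) / k := ⟨⟨_, hdet⟩, rfl, rfl, rfl, rfl⟩
  refine ⟨g, ?_⟩
  have hv : pt B (A + C) (A * l + C * m) (A * l ^ 2 + C * m ^ 2) (A * l ^ 3 + C * m ^ 3)
      = A • cone B 1 l + C • cone B 1 m := by
    rw [cone, cone, pt_smul, pt_smul, pt_add]
    congr 1 <;> ring
  rw [hv, map_add, map_smul, map_smul, act_cone hB, act_cone hB]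
  have f1 : (-z⁻¹ * m - z * l) / k * 1 + (z + z⁻¹) / k * l = -z⁻¹ := by
    rw [hkm]; field_simp; ring
  have f2 : (-z⁻¹ * m - z * l) / k * 1 + (z + z⁻¹) / k * m = z := by
    rw [hkm]; field_simp; ring
  have f3 : (-z⁻¹ * m ^ 2 - z * l ^ 2) / k * 1 + (z * l + z⁻¹ * m) / k * l = -z⁻¹ * m := by
    rw [hkm]; field_simp; ring
  have f4 : (-z⁻¹ * m ^ 2 - z * l ^ 2) / k * 1 + (z * l + z⁻¹ * m) / k * m = z * l := by
    rw [hkm]; field_simp; ring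
  rw [g00, g01, g10, g11]
  rw [f1, f2, f3, f4]
  simp only [cone, pt_smul, pt_add]
  congr 1
  · linear_combination hz1 - hz2
  · linear_combination l * hz1 - m * hz2
  · linear_combination l ^ 2 * hz1 - m ^ 2 * hz2
  · linear_combination l ^ 3 * hz1 - m ^ 3 * hz2

lemma grad_zero (a b c d : ℂ) (ha : 2 * a * d ^ 2 - 6 * b * c * d + 4 * c ^ 3 = 0)
    (hc : -6 * a * b * d + 12 * a * c ^ 2 - 6 * b ^ 2 * c = 0)
    (hd : 2 * a ^ 2 * d - 6 * a * b * c + 4 * b ^ 3 = 0) :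
    ∃ x y : ℂ, a = x ^ 3 ∧ b = x ^ 2 * y ∧ c = x * y ^ 2 ∧ d = y ^ 3 := by
  by_cases h : a = 0
  · subst h
    have hb : b = 0 := by
      have : b ^ 3 = 0 := by linear_combination hd / 4
      exact pow_eq_zero_iff (three_ne_zero) |>.1 this
    subst hb
    have hc : c = 0 := by
      have : c ^ 3 = 0 := by linear_combination ha / 4
      exact pow_eq_zero_iff (three_ne_zero) |>.1 this
    subst hc
    obtain ⟨y, hy⟩ := cube_root d
    exact ⟨0, y, by simp, by simp, by simp, hy.symm⟩
  · have h1 : a * c - b ^ 2 = 0 := by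
      have : (a * c - b ^ 2) ^ 2 = 0 := by
        linear_combination a * hc / 12 + b * hd / 4
      exact pow_eq_zero_iff (two_ne_zero) |>.1 this
    obtain ⟨x, hx⟩ := cube_root a
    have hx0 : x ≠ 0 := by rintro rfl; apply h; rw [← hx]; norm_num
    refine ⟨x, b / x ^ 2, hx.symm, by field_simp, ?_, ?_⟩
    · apply mul_left_cancel₀ h
      rw [← hx] at h1 ⊢
      field_simp
      linear_combination h1
    · have h2 : a ^ 2 * d = b ^ 3 := by linear_combination hd / 2 + 3 * b * h1
      rw [← hx] at h2
      field_simp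
      linear_combination h2

def Pol (B : Module.Basis (Fin 4) ℂ V4) (v w : V4) : ℂ :=
  8 * (Disc B (v + w) - Disc B (v - w)) - (Disc B (v + (2 : ℂ) • w) - Disc B (v - (2 : ℂ) • w))

lemma Pol_cone (B : Module.Basis (Fin 4) ℂ V4) (x y : ℂ) (w : V4) : Pol B (cone B x y) w = 0 := by
  rw [pt_coord B w]
  simp only [Pol, cone, pt_add, pt_sub, pt_smul, Disc_pt, disc]
  ring

lemma cone_pres (B : Module.Basis (Fin 4) ℂ V4) (φ : V4 ≃ₗ[ℂ] V4)
    (hφ : ∀ v, Disc B (φ v) = Disc B v) (x y : ℂ) : ∃ x' y', φ (cone B x y) = cone B x' y' := by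
  have hP : ∀ w, Pol B (φ (cone B x y)) w = 0 := by
    intro w
    rw [← Pol_cone B x y (φ.symm w)]
    conv_lhs => rw [← φ.apply_symm_apply w]
    simp only [Pol]
    simp only [← map_smul, ← map_add, ← map_sub, hφ]
  rw [pt_coord B (φ (cone B x y))] at hP ⊢
  generalize B.coord 0 (φ (cone B x y)) = a at *
  generalize B.coord 1 (φ (cone B x y)) = b at *
  generalize B.coord 2 (φ (cone B x y)) = c at *
  generalize B.coord 3 (φ (cone B x y)) = d at *
  have e0 := hP (pt B 1 0 0 0)
  have e2 := hP (pt B 0 0 1 0)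
  have e3 := hP (pt B 0 0 0 1)
  simp only [Pol, pt_add, pt_sub, pt_smul, Disc_pt, disc] at e0 e2 e3
  obtain ⟨x', y', h0, h1, h2, h3⟩ := grad_zero a b c d
    (by linear_combination e0 / 12) (by linear_combination e2 / 12) (by linear_combination e3 / 12)
  exact ⟨x', y', by rw [cone, h0, h1, h2, h3]⟩

lemma poly5 (c1 c2 c3 c4 c5 : ℂ)
    (h : ∀ t : ℂ, c1 * t + c2 * t ^ 2 + c3 * t ^ 3 + c4 * t ^ 4 + c5 * t ^ 5 = 0) :
    c1 = 0 ∧ c2 = 0 ∧ c3 = 0 ∧ c4 = 0 ∧ c5 = 0 := by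
  have key := coeff_zero Set.univ Set.infinite_univ 6
    (fun k => match k with | 0 => 0 | 1 => c1 | 2 => c2 | 3 => c3 | 4 => c4 | _ => c5) (by
      intro y _
      simp only [Finset.sum_range_succ, Finset.sum_range_zero, smul_eq_mul]
      linear_combination h y)
  exact ⟨key 1 (by norm_num), key 2 (by norm_num), key 3 (by norm_num), key 4 (by norm_num),
    key 5 (by norm_num)⟩

lemma psi_diag (B : Module.Basis (Fin 4) ℂ V4) (ψ : V4 ≃ₗ[ℂ] V4)
    (hψ : ∀ v, Disc B (ψ v) = Disc B v) (e : ℂ) (he : e ≠ 0)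
    (h0 : ψ (pt B 1 0 0 0) = pt B 1 0 0 0) (h3 : ψ (pt B 0 0 0 1) = pt B 0 0 0 e) :
    ∃ p : ℂ, p ^ 6 = 1 ∧ ∀ x0 x1 x2 x3,
      ψ (pt B x0 x1 x2 x3) = pt B x0 (p * x1) (p ^ 2 * x2) (p ^ 3 * x3) := by
  obtain ⟨p0, p1, p2, p3, h1⟩ : ∃ p0 p1 p2 p3, ψ (pt B 0 1 0 0) = pt B p0 p1 p2 p3 :=
    ⟨_, _, _, _, pt_coord B _⟩
  obtain ⟨q0, q1, q2, q3, h2⟩ : ∃ p0 p1 p2 p3, ψ (pt B 0 0 1 0) = pt B p0 p1 p2 p3 :=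
    ⟨_, _, _, _, pt_coord B _⟩
  have hgen : ∀ x0 x1 x2 x3, ψ (pt B x0 x1 x2 x3) = pt B (x0 + p0 * x1 + q0 * x2)
      (p1 * x1 + q1 * x2) (p2 * x1 + q2 * x2) (p3 * x1 + q3 * x2 + e * x3) := by
    intro x0 x1 x2 x3
    have : pt B x0 x1 x2 x3 = x0 • pt B 1 0 0 0 + x1 • pt B 0 1 0 0 + x2 • pt B 0 0 1 0
        + x3 • pt B 0 0 0 1 := by
      simp only [pt]; module
    rw [this]
    simp only [map_add, map_smul, h0, h1, h2, h3]
    simp only [pt]; module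
  have hcone : ∀ t : ℂ, ∃ x y : ℂ, 1 + p0 * t + q0 * t ^ 2 = x ^ 3 ∧
      p1 * t + q1 * t ^ 2 = x ^ 2 * y ∧ p2 * t + q2 * t ^ 2 = x * y ^ 2 ∧
      p3 * t + q3 * t ^ 2 + e * t ^ 3 = y ^ 3 := by
    intro t
    obtain ⟨x, y, hxy⟩ := cone_pres B ψ hψ 1 t
    rw [cone, hgen, cone] at hxy
    obtain ⟨k0, k1, k2, k3⟩ := pt_inj hxy
    refine ⟨x, y, ?_, ?_, ?_, ?_⟩
    · rw [← k0]; ring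
    · rw [← k1]; ring
    · rw [← k2]; ring
    · rw [← k3]; ring
  obtain ⟨a1, a2, a3, a4, a5⟩ := poly5 p2 (q2 + p0 * p2 - p1 ^ 2) (p0 * q2 + q0 * p2 - 2 * p1 * q1)
    (q0 * q2 - q1 ^ 2) 0 (by
      intro t
      obtain ⟨x, y, k0, k1, k2, k3⟩ := hcone t
      have : (1 + p0 * t + q0 * t ^ 2) * (p2 * t + q2 * t ^ 2) - (p1 * t + q1 * t ^ 2) ^ 2 = 0 := by
        rw [k0, k1, k2]; ring
      linear_combination this)
  obtain ⟨b1, b2, b3, b4, b5⟩ := poly5 p3 (q3 + p0 * p3 - p1 * p2)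
    (e + p0 * q3 + q0 * p3 - p1 * q2 - q1 * p2) (p0 * e + q0 * q3 - q1 * q2) (q0 * e) (by
      intro t
      obtain ⟨x, y, k0, k1, k2, k3⟩ := hcone t
      have : (1 + p0 * t + q0 * t ^ 2) * (p3 * t + q3 * t ^ 2 + e * t ^ 3)
        - (p1 * t + q1 * t ^ 2) * (p2 * t + q2 * t ^ 2) = 0 := by
        rw [k0, k1, k2, k3]; ring
      linear_combination this)
  obtain ⟨c1, c2, c3, c4, c5⟩ := poly5 0 (p1 * p3 - p2 ^ 2)
    (p1 * q3 + q1 * p3 - 2 * p2 * q2) (p1 * e + q1 * q3 - q2 ^ 2) (q1 * e) (by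
      intro t
      obtain ⟨x, y, k0, k1, k2, k3⟩ := hcone t
      have : (p1 * t + q1 * t ^ 2) * (p3 * t + q3 * t ^ 2 + e * t ^ 3)
        - (p2 * t + q2 * t ^ 2) ^ 2 = 0 := by
        rw [k1, k2, k3]; ring
      linear_combination this)
  have hp2 : p2 = 0 := a1
  have hp3 : p3 = 0 := b1
  have hq0 : q0 = 0 := (mul_eq_zero.1 b5).resolve_right he
  have hq1 : q1 = 0 := (mul_eq_zero.1 c5).resolve_right he
  subst hp2 hp3 hq0 hq1
  have hq3 : q3 = 0 := by linear_combination b2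
  have hp0 : p0 = 0 := (mul_eq_zero.1 (show p0 * e = 0 by linear_combination b4)).resolve_right he
  subst hq3 hp0
  have hq2 : q2 = p1 ^ 2 := by linear_combination a2
  subst hq2
  have hep : e = p1 ^ 3 := by linear_combination b3
  subst hep
  refine ⟨p1, ?_, fun x0 x1 x2 x3 => ?_⟩
  · have := hψ (pt B 1 0 0 1)
    rw [hgen, Disc_pt, Disc_pt] at this
    simp only [disc] at this
    linear_combination this
  · rw [hgen]; congr 1 <;> ring

lemma delta_mem {ρ : SL →* (V4 ≃ₗ[ℂ] V4)} {B : Module.Basis (Fin 4) ℂ V4} (hB : HasAct ρ B) :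
    LinearEquiv.smulOfNeZero ℂ V4 Complex.I Complex.I_ne_zero ∈ primeGroup ρ.range := by
  intro f hf hinv v
  have hsub : IsPolyFun (fun v => f (Complex.I • v) - f v) :=
    Subalgebra.sub_mem _ (poly_smul f hf Complex.I) hf
  have hQ : IsPolyFun (fun v => Disc B v * Hes B v) :=
    Subalgebra.mul_mem _ (Disc_poly B) (Hes_poly B)
  have := poly_cancel _ _ hsub hQ (pt B 1 0 1 0) (by
    simp [Disc_pt, disc, Hes, coord0, coord1, coord2, -Module.Basis.coord_apply]) (by
    intro v hv
    obtain ⟨g, hg⟩ := generic_orbit hB v (left_ne_zero_of_mul hv) (right_ne_zero_of_mul hv)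
    rw [← hg, hinv (ρ g) ⟨g, rfl⟩, sub_self]) v
  exact sub_eq_zero.1 this

lemma delta_not_mem {ρ : SL →* (V4 ≃ₗ[ℂ] V4)} {B : Module.Basis (Fin 4) ℂ V4} (hB : HasAct ρ B) :
    LinearEquiv.smulOfNeZero ℂ V4 Complex.I Complex.I_ne_zero ∉ ρ.range := by
  rintro ⟨g, hg⟩
  have h : ∀ v, ρ g v = Complex.I • v := fun v => by rw [hg]; rfl
  have h0 := h (cone B 1 0)
  have h3 := h (cone B 0 1)
  rw [act_cone hB, cone, cone, pt_smul] at h0 h3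
  obtain ⟨a0, -, -, a3⟩ := pt_inj h0
  obtain ⟨b0, -, -, b3⟩ := pt_inj h3
  have hd := SL_det g
  generalize g 0 0 = a at *
  generalize g 0 1 = b at *
  generalize g 1 0 = c at *
  generalize g 1 1 = d at *
  have hc : c ^ 3 = 0 := by linear_combination a3
  have hc0 : c = 0 := pow_eq_zero_iff (three_ne_zero) |>.1 hc
  subst hc0
  have e1 : a ^ 3 = Complex.I := by linear_combination a0
  have e2 : d ^ 3 = Complex.I := by linear_combination b3
  have e3 : a * d = 1 := by linear_combination hd
  have e4 : (a * d) ^ 3 = -1 := by rw [mul_pow, e1, e2, Complex.I_mul_I]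
  rw [e3] at e4
  norm_num at e4

lemma prime_pres {ρ : SL →* (V4 ≃ₗ[ℂ] V4)} {B : Module.Basis (Fin 4) ℂ V4} (hB : HasAct ρ B)
    (φ : V4 ≃ₗ[ℂ] V4) (hφ : φ ∈ primeGroup ρ.range) (v : V4) : Disc B (φ v) = Disc B v := by
  apply hφ (Disc B) (Disc_poly B)
  rintro _ ⟨g, rfl⟩ v
  exact Disc_inv hB g v

lemma range_le {ρ : SL →* (V4 ≃ₗ[ℂ] V4)} (φ : V4 ≃ₗ[ℂ] V4) (h : φ ∈ ρ.range) :
    φ ∈ primeGroup ρ.range := fun _ _ hinv v => hinv φ h v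

lemma prime_scalar {ρ : SL →* (V4 ≃ₗ[ℂ] V4)} {B : Module.Basis (Fin 4) ℂ V4} (hB : HasAct ρ B)
    (φ : V4 ≃ₗ[ℂ] V4) (hφ : φ ∈ primeGroup ρ.range) :
    ∃ (g : SL) (ε : ℂ), ε ^ 4 = 1 ∧ ∀ v, φ v = ε • ρ g v := by
  obtain ⟨x, y, hxy⟩ := cone_pres B φ (prime_pres hB φ hφ) 1 0
  obtain ⟨z, u, hzu⟩ := cone_pres B φ (prime_pres hB φ hφ) 0 1
  have e0 : cone B 1 0 = pt B 1 0 0 0 := by rw [cone]; norm_num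
  have e3 : cone B 0 1 = pt B 0 0 0 1 := by rw [cone]; norm_num
  have hD : x * u - z * y ≠ 0 := by
    intro hD
    have key : ∀ α β : ℂ, α • cone B x y = β • cone B z u → α = 0 ∧ β = 0 := by
      intro α β h
      rw [← hxy, ← hzu, ← map_smul, ← map_smul] at h
      have := φ.injective h
      rw [e0, e3, pt_smul, pt_smul] at this
      obtain ⟨k0, -, -, k3⟩ := pt_inj this
      exact ⟨by linear_combination k0, by linear_combination -k3⟩
    have hE : x * u = z * y := by linear_combination hD
    have k1 := key (u ^ 3) (y ^ 3) (by
      rw [cone, cone, pt_smul, pt_smul]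
      congr 1
      · rw [← mul_pow, mul_comm, hE]; ring
      · linear_combination (u * y) * (x * u + z * y) * hE
      · linear_combination (u ^ 2 * y ^ 2) * hE
      · ring)
    have k2 := key (z ^ 3) (x ^ 3) (by
      rw [cone, cone, pt_smul, pt_smul]
      congr 1
      · ring
      · linear_combination (-x ^ 2 * z ^ 2) * hE
      · linear_combination (-x * z) * (x * u + z * y) * hE
      · linear_combination -((x * u) ^ 2 + x * u * z * y + (z * y) ^ 2) * hE)
    have hx : x = 0 := pow_eq_zero_iff (three_ne_zero) |>.1 k2.2
    have hy : y = 0 := pow_eq_zero_iff (three_ne_zero) |>.1 k1.2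
    have := key 1 0 (by rw [hx, hy, cone, pt_smul, zero_smul]; simp [pt])
    exact one_ne_zero this.1
  obtain ⟨D, hDD⟩ : ∃ D, D = x * u - z * y := ⟨_, rfl⟩
  rw [← hDD] at hD
  have hdet : (!![x, z / D; y, u / D] : Matrix (Fin 2) (Fin 2) ℂ).det = 1 := by
    rw [Matrix.det_fin_two_of]
    field_simp
    rw [hDD]
  let g : SL := ⟨_, hdet⟩
  have g00 : g 0 0 = x := rfl
  have g01 : g 0 1 = z / D := rfl
  have g10 : g 1 0 = y := rfl
  have g11 : g 1 1 = u / D := rfl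
  have hg0 : ρ g (cone B 1 0) = cone B x y := by
    rw [act_cone hB, g00, g01, g10, g11]; congr 1 <;> ring
  have hg3 : ρ g (cone B 0 D) = cone B z u := by
    rw [act_cone hB, g00, g01, g10, g11]; congr 1 <;> field_simp <;> ring
  let ψ : V4 ≃ₗ[ℂ] V4 := (ρ g)⁻¹ * φ
  have hψv : ∀ v, ρ g (ψ v) = φ v := fun v => (ρ g).apply_symm_apply (φ v)
  have hψ : ψ ∈ primeGroup ρ.range :=
    mul_mem (inv_mem (range_le _ ⟨g, rfl⟩)) hφ
  obtain ⟨p, hp, hpψ⟩ := psi_diag B ψ (prime_pres hB ψ hψ) (D ^ 3) (pow_ne_zero _ hD)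
    (by
      apply (ρ g).injective
      rw [hψv, ← e0, hxy, hg0])
    (by
      apply (ρ g).injective
      rw [hψv, ← e3, hzu, ← hg3, cone]
      congr 2 <;> ring)
  obtain ⟨r, hr⟩ := sq_root p
  have hr12 : (r ^ 3) ^ 4 = 1 := by rw [← hp, ← hr]; ring
  have hr0 : r ≠ 0 := by rintro rfl; norm_num at hr12
  refine ⟨g * tor r⁻¹ (inv_ne_zero hr0), r ^ 3, hr12, fun v => ?_⟩
  rw [← hψv, rho_mul, ← map_smul]
  congr 1
  rw [pt_coord B v, hpψ, act_pt hB, pt_smul, ← hr]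
  simp only [tor00, tor01, tor10, tor11, inv_inv]
  congr 1
  · field_simp; ring
  · field_simp; ring
  · field_simp; ring
  · ring

/-- Let `G = SL₂(ℂ)` act on `V = R₃ = Sym³(ℂ²)`, its 4-dimensional
irreducible representation (realized as any polynomial irreducible representation on
`ℂ⁴`).  Then `G'/G` is generated by scalar multiplication by `i` on `R₃`: one has
`δ = i·id ∈ G'`, `δ ∉ G`, and `G' = G ∪ δ·G` (note that `δ² = -id ∈ G`, so the coset of
`δ` has order 2 and `G'` is the image of `{g ∈ GL₂(ℂ) : det g = ±1}` acting on
`Sym³(ℂ²)`). -/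
theorem stmt17
    (ρ : Matrix.SpecialLinearGroup (Fin 2) ℂ →* ((Fin 4 → ℂ) ≃ₗ[ℂ] (Fin 4 → ℂ)))
    (hρpoly : IsPolynomialRep ρ) (hρirr : IsIrreducibleRep ρ)
    (δ : (Fin 4 → ℂ) ≃ₗ[ℂ] (Fin 4 → ℂ))
    (hδ : δ = LinearEquiv.smulOfNeZero ℂ (Fin 4 → ℂ) Complex.I Complex.I_ne_zero) :
    δ ∈ primeGroup ρ.range ∧ δ ∉ ρ.range ∧
    (∀ φ, φ ∈ primeGroup ρ.range ↔ (φ ∈ ρ.range ∨ ∃ u ∈ ρ.range, φ = δ * u)) := by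
  subst hδ
  obtain ⟨B, hB⟩ := structure_thm ρ hρpoly hρirr
  replace hB : HasAct ρ B := hB
  have hδm := delta_mem hB
  refine ⟨hδm, delta_not_mem hB, fun φ => ⟨fun hφ => ?_, ?_⟩⟩
  · obtain ⟨g, ε, hε, hgε⟩ := prime_scalar hB φ hφ
    have hneg : ∀ v, ρ (g * tor (-1) (by norm_num)) v = - ρ g v := by
      intro v
      rw [rho_mul, ← map_neg]
      congr 1
      have h1 : -v = (-1 : ℂ) • v := by simp
      rw [h1, pt_coord B v, act_pt hB, pt_smul]
      simp only [tor00, tor01, tor10, tor11]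
      congr 1 <;> norm_num
    have hfac : (ε - 1) * ((ε + 1) * ((ε - Complex.I) * (ε + Complex.I))) = 0 := by
      linear_combination hε - (ε ^ 2 - 1) * Complex.I_sq
    rcases mul_eq_zero.1 hfac with h | h
    · left
      refine ⟨g, ?_⟩
      ext1 v
      rw [hgε, sub_eq_zero.1 h, one_smul]
    rcases mul_eq_zero.1 h with h | h
    · left
      refine ⟨g * tor (-1) (by norm_num), ?_⟩
      ext1 v
      rw [hgε, eq_neg_of_add_eq_zero_left h, neg_one_smul]
      exact hneg v
    rcases mul_eq_zero.1 h with h | h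
    · right
      refine ⟨ρ g, ⟨g, rfl⟩, ?_⟩
      ext1 v
      rw [hgε, sub_eq_zero.1 h]
      rfl
    · right
      refine ⟨ρ (g * tor (-1) (by norm_num)), ⟨_, rfl⟩, ?_⟩
      ext1 v
      have : (LinearEquiv.smulOfNeZero ℂ V4 Complex.I Complex.I_ne_zero *
        ρ (g * tor (-1) (by norm_num))) v = Complex.I • ρ (g * tor (-1) (by norm_num)) v := rfl
      rw [hgε, eq_neg_of_add_eq_zero_left h]
      refine Eq.trans ?_ this.symm
      rw [hneg, smul_neg, neg_smul]
  · rintro (h | ⟨u, hu, rfl⟩)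
    · exact range_le _ h
    · exact mul_mem hδm (range_le _ hu)

end Stmt17
end
end
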